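/- (Symmetry of super ribbon functions.) Fix n ≥ 1, a skew shape λ/μ, integers N, M ≥ 1, and a total order ≺ on the union of the alphabets A = {1 < ⋯ < N} and A' = {1' < ⋯ < M'} extending the natural order on each. Then the super ribbon function 𝒢_{λ/μ}(X/Y;q) ∈ ℤ[q][x_1,…,x_N,y_1,…,y_M] is symmetric separately in the variables x_1,…,x_N and in the variables y_1,…,y_M. -/

import Mathlib

/-!
Let `J` be the set of partitions contained in `lam`, and let `H(x)`, `V(y)` be the `J × J` matrices
whose `(α, β)` entry sums `∏ x q ^ spin`, resp. `∏ y q ^ spin`, over the ribbons of the tilings of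
`β / α` as a horizontal, resp. vertical, `n`-ribbon strip.  A super ribbon tableau is a path in
`J`, so the super ribbon function is the `(mu, lam)` entry of the product of the matrices of the
letters, taken in the given order (`SuperRibbon.superRibbonFn_eq`).  If all these matrices commute,
permuting the variables within each alphabet only reorders the factors
(`SuperRibbon.rename_superRibbonFn`).

*Vertical strips reduce to horizontal ones.*  A horizontal strip is built in a unique way by adding
ribbons in increasing order of their largest content (`SuperRibbon.Gk_of_step`), so that
`H(x) = ∏ (1 + x u_k)` with `k` increasing, where `u_k` adds one ribbon with largest content `k`,
weighted by `q ^ spin`.  By conjugation `V(y) = ∏ (1 + y u_k)` with `k` decreasing.  Since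
`u_k ^ 2 = 0`, this gives `V(y) H(-y) = 1` (`SuperRibbon.Vm_mul_Hm_neg`), and everything follows
from the commutation of the matrices `H(x)` (`SuperRibbon.Hm_comm`).

*Horizontal strips commute.*  Encode a partition by the `0/1` sequence of its boundary (a Maya
diagram).  Removing a ribbon moves a bead by `n` positions onto an empty one, and the spin counts
the beads jumped over (`SuperRibbon.Gk_eq_P`).  Reading positions from the top, `H(x)` becomes a row
transfer matrix of a lattice model whose auxiliary state is a window of `n` flags marking the
pending landings of beads (`SuperRibbon.row`).  For two stacked rows, with the intermediate sequence
summed out (`SuperRibbon.Zh`), there is an explicit triangular matrix `SuperRibbon.cf` on pairs of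
windows which intertwines the model with parameters `(x₁, x₂)` and the one with `(x₂, x₁)`.  It is
assembled from the one-letter coefficients `SuperRibbon.gf`, and the intertwining property reduces
to a finite local identity (`SuperRibbon.locW_exchange`), propagated position by position in
`SuperRibbon.Zh_exchange`.  As `cf` fixes the empty window, rows with empty initial window commute.
The argument divides by `q` and `x₁`, so it is carried out in a field and applied to the fraction
field of the polynomial ring.
-/

open scoped Classical

noncomputable section

/-- A cell of a Young/skew diagram: (row, column). -/
abbrev Cell : Type := ℕ × ℕ

/-- Two cells are adjacent if they share an edge. -/
def Adj (a b : Cell) : Prop :=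
  (a.1 = b.1 ∧ (a.2 + 1 = b.2 ∨ b.2 + 1 = a.2)) ∨
  (a.2 = b.2 ∧ (a.1 + 1 = b.1 ∨ b.1 + 1 = a.1))

/-- Reachability inside a finite set of cells via edge-adjacency. -/
def Reach (S : Finset Cell) (a b : Cell) : Prop :=
  Relation.ReflTransGen (fun x y => y ∈ S ∧ Adj x y) a b

/-- A set of cells is connected if any two of its cells are joined by a path inside it. -/
def CellsConnected (S : Finset Cell) : Prop :=
  ∀ a ∈ S, ∀ b ∈ S, Reach S a b

/-- The connected component of the cell `c` inside `S`. -/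
def component (S : Finset Cell) (c : Cell) : Finset Cell :=
  S.filter (fun d => Reach S c d)

/-- The number of connected components of a set of cells. -/
def numComponents (S : Finset Cell) : ℕ :=
  (S.image (fun c => component S c)).card

/-- `S` contains no 2 × 2 square of cells. -/
def NoSquare (S : Finset Cell) : Prop :=
  ¬ ∃ i j : ℕ, (i, j) ∈ S ∧ (i + 1, j) ∈ S ∧ (i, j + 1) ∈ S ∧ (i + 1, j + 1) ∈ S

/-- `S` is (the set of cells of) a skew shape `λ/μ`. -/
def IsSkewCells (S : Finset Cell) : Prop :=
  ∃ lam mu : YoungDiagram, mu ≤ lam ∧ S = lam.cells \ mu.cells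

/-- An `n`-ribbon: a connected skew shape with `n` cells and no 2 × 2 square. -/
def IsRibbon (n : ℕ) (S : Finset Cell) : Prop :=
  S.card = n ∧ CellsConnected S ∧ NoSquare S ∧ IsSkewCells S

/-- The spin of a ribbon: the number of rows it occupies, minus 1. -/
def ribbonSpin (S : Finset Cell) : ℕ := (S.image Prod.fst).card - 1

/-- `T` is a tiling of the cell set `S` by `n`-ribbons. -/
def IsTilingOf (n : ℕ) (S : Finset Cell) (T : Finset (Finset Cell)) : Prop :=
  (∀ R ∈ T, IsRibbon n R) ∧
  ((T : Set (Finset Cell)).Pairwise fun A B => Disjoint A B) ∧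
  T.biUnion id = S

/-- `S` can be tiled by `n`-ribbons. -/
def Tileable (n : ℕ) (S : Finset Cell) : Prop := ∃ T, IsTilingOf n S T

/-- Total spin of a tiling. -/
def tilingSpin (T : Finset (Finset Cell)) : ℕ := ∑ R ∈ T, ribbonSpin R

/-- The maximum spin of an `n`-ribbon tiling of `S`. -/
def maxSpin (n : ℕ) (S : Finset Cell) : ℕ :=
  sSup {m : ℕ | ∃ T, IsTilingOf n S T ∧ tilingSpin T = m}

/-- `c` is the topright-most cell of `R`: maximal column and, among those, minimal row. -/
def TopRightCell (R : Finset Cell) (c : Cell) : Prop :=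
  c ∈ R ∧ ∀ d ∈ R, d.2 ≤ c.2 ∧ (d.2 = c.2 → c.1 ≤ d.1)

/-- Every ribbon of the tiling `T` has its topright-most cell touching the northern
edge of the shape `S`: the cell directly above it is not in `S`. -/
def NorthernCond (S : Finset Cell) (T : Finset (Finset Cell)) : Prop :=
  ∀ R ∈ T, ∀ c : Cell, TopRightCell R c → (c.1 = 0 ∨ (c.1 - 1, c.2) ∉ S)

/-- `T` is a tiling of `S` witnessing that `S` is a horizontal `n`-ribbon strip. -/
def IsHStripTiling (n : ℕ) (S : Finset Cell) (T : Finset (Finset Cell)) : Prop :=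
  IsTilingOf n S T ∧ NorthernCond S T

/-- `S` is a horizontal `n`-ribbon strip. -/
def IsHStripCells (n : ℕ) (S : Finset Cell) : Prop :=
  IsSkewCells S ∧ ∃ T, IsHStripTiling n S T

/-- The spin of a horizontal `n`-ribbon strip (via its tiling, which is unique when it exists). -/
def stripSpin (n : ℕ) (S : Finset Cell) : ℕ :=
  if h : ∃ T, IsHStripTiling n S T then tilingSpin h.choose else 0

/-- Conjugate (transpose) of a set of cells. -/
def swapCells (S : Finset Cell) : Finset Cell := S.image Prod.swap

/-- `S` is a vertical `n`-ribbon strip: its conjugate is a horizontal one. -/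
def IsVStripCells (n : ℕ) (S : Finset Cell) : Prop :=
  IsHStripCells n (swapCells S)

/-- The spin of a vertical `n`-ribbon strip with `k = |S|/n` ribbons:
`k (n-1)` minus the spin of the conjugate strip. -/
def vStripSpin (n : ℕ) (S : Finset Cell) : ℕ :=
  (S.card / n) * (n - 1) - stripSpin n (swapCells S)

/-- `T` is a tiling of `S` witnessing that `S` is a vertical `n`-ribbon strip. -/
def IsVStripTiling (n : ℕ) (S : Finset Cell) (T : Finset (Finset Cell)) : Prop :=
  IsHStripTiling n (swapCells S) (T.image swapCells)

/-- `mu` is obtained from `lam` by removing a single `n`-ribbon. -/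
def RibbonStep (n : ℕ) (lam mu : YoungDiagram) : Prop :=
  mu ≤ lam ∧ IsRibbon n (lam.cells \ mu.cells)

/-- `delta` is the `n`-core of `lam`: it is obtained from `lam` by successively removing
`n`-ribbons, and no further `n`-ribbon can be removed from it. -/
def IsNCoreOf (n : ℕ) (delta lam : YoungDiagram) : Prop :=
  Relation.ReflTransGen (RibbonStep n) lam delta ∧ ∀ mu, ¬ RibbonStep n delta mu

/-- The `n`-core of a partition (defined via choice; it exists and is unique). -/
def nCore (n : ℕ) (lam : YoungDiagram) : YoungDiagram :=
  if h : ∃ d, IsNCoreOf n d lam then h.choose else lam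

/-- A semistandard `n`-ribbon tableau of shape `lam/mu` with entries in `{1, …, N}`:
a chain of partitions `mu = μ⁰ ⊆ μ¹ ⊆ ⋯ ⊆ μᴺ = lam` where each `μⁱ/μ^{i-1}` is a (possibly
empty) horizontal `n`-ribbon strip, together with the (unique) tiling of each strip. -/
structure RibbonTableau (n N : ℕ) (lam mu : YoungDiagram) where
  chain : Fin (N + 1) → YoungDiagram
  chain_zero : chain 0 = mu
  chain_last : chain (Fin.last N) = lam
  chain_mono : ∀ i : Fin N, chain i.castSucc ≤ chain i.succ
  tiling : Fin N → Finset (Finset Cell)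
  tiling_strip : ∀ i : Fin N,
    IsHStripTiling n ((chain i.succ).cells \ (chain i.castSucc).cells) (tiling i)

/-- The spin of a ribbon tableau. -/
def RibbonTableau.spin {n N : ℕ} {lam mu : YoungDiagram} (T : RibbonTableau n N lam mu) : ℕ :=
  ∑ i : Fin N, tilingSpin (T.tiling i)

/-- A standard ribbon tableau: each letter occurs exactly once. -/
def RibbonTableau.IsStandard {n N : ℕ} {lam mu : YoungDiagram}
    (T : RibbonTableau n N lam mu) : Prop :=
  ∀ i : Fin N, (T.tiling i).card = 1

/-- The monomial `q^{spin T} x^{weight T}` attached to a ribbon tableau. -/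
def tableauTerm {n N : ℕ} {lam mu : YoungDiagram} (T : RibbonTableau n N lam mu) :
    MvPolynomial (Fin N) (Polynomial ℤ) :=
  MvPolynomial.C (Polynomial.X ^ T.spin) *
    ∏ i : Fin N, MvPolynomial.X i ^ (T.tiling i).card

/-- The ribbon function `𝒢_{lam/mu}(x₁, …, x_N; q)`. -/
def ribbonFn (n N : ℕ) (lam mu : YoungDiagram) : MvPolynomial (Fin N) (Polynomial ℤ) :=
  ∑ᶠ T : RibbonTableau n N lam mu, tableauTerm T

/-- `𝒢_lam = 𝒢_{lam/(n-core of lam)}`. -/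
def G (n N : ℕ) (lam : YoungDiagram) : MvPolynomial (Fin N) (Polynomial ℤ) :=
  ribbonFn n N lam (nCore n lam)

/-- The Schur polynomial `s_ν(x₁,…,x_N)`, realized as the `n = 1` ribbon function
(1-ribbon tableaux are exactly semistandard Young tableaux, and all spins are 0). -/
def schurPoly (N : ℕ) (nu : YoungDiagram) : MvPolynomial (Fin N) (Polynomial ℤ) :=
  ribbonFn 1 N nu ⊥

/-- The cells of the `i`-th horizontal strip of a decomposition. -/
def stripCells {len : ℕ} (strip : Fin len → Finset (Finset Cell)) (i : Fin len) : Finset Cell :=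
  (strip i).biUnion id

/-- The cells of `lam` together with the strips up to (and including) `i`. -/
def partialCells {len : ℕ} (strip : Fin len → Finset (Finset Cell)) (lam : YoungDiagram)
    (i : Fin len) : Finset Cell :=
  lam.cells ∪ (Finset.univ.filter (fun j => j ≤ i)).biUnion (fun j => stripCells strip j)

/-- The union of the cells of the strips strictly before `i`. -/
def prevCells {len : ℕ} (strip : Fin len → Finset (Finset Cell)) (i : Fin len) : Finset Cell :=
  (Finset.univ.filter (fun j => j < i)).biUnion (fun j => stripCells strip j)

/-- Two cell sets touch if some cell of one is adjacent to some cell of the other. -/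
def Touches (A B : Finset Cell) : Prop :=
  ∃ a ∈ A, ∃ b ∈ B, Adj a b

/-- `R` is the rightmost ribbon within the cell set `C`. -/
def IsRightmostIn (R C : Finset Cell) : Prop :=
  ∃ c ∈ R, ∀ d ∈ C, d.2 ≤ c.2

/-- A border `n`-ribbon strip of shape `mu/lam`: the connected skew shape `mu/lam` with a
distinguished decomposition into disjoint non-empty horizontal `n`-ribbon strips
`T₁, …, T_len` (each recorded by its tiling) such that each partial union is a skew shape,
`T₁` is connected, and for `i ≥ 2` every connected component `C` of `Tᵢ` is such that
`C ∪ (T₁ ∪ ⋯ ∪ T_{i-1})` is not a horizontal `n`-ribbon strip and only the rightmost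
ribbon of `C` touches `T₁ ∪ ⋯ ∪ T_{i-1}`. -/
structure BorderRibbonStrip (n : ℕ) (lam mu : YoungDiagram) where
  len : ℕ
  len_pos : 1 ≤ len
  strip : Fin len → Finset (Finset Cell)
  sub : lam ≤ mu
  connected : CellsConnected (mu.cells \ lam.cells)
  nonempty : ∀ i, (strip i).Nonempty
  disj : ∀ i j, i ≠ j → Disjoint (stripCells strip i) (stripCells strip j)
  cover : Finset.univ.biUnion (fun i => stripCells strip i) = mu.cells \ lam.cells
  shape : ∀ i, ∃ nu : YoungDiagram, nu.cells = partialCells strip lam i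
  hstrips : ∀ i, IsHStripTiling n (stripCells strip i) (strip i)
  first_connected : CellsConnected (stripCells strip ⟨0, len_pos⟩)
  comp_cond : ∀ i : Fin len, 0 < (i : ℕ) → ∀ c ∈ stripCells strip i,
    (¬ IsHStripCells n (component (stripCells strip i) c ∪ prevCells strip i)) ∧
    (∀ R ∈ strip i, R ⊆ component (stripCells strip i) c →
      Touches R (prevCells strip i) → IsRightmostIn R (component (stripCells strip i) c))

/-- The height of a border ribbon strip: total number of connected components of its
horizontal strips, minus 1. -/
def BorderRibbonStrip.height {n : ℕ} {lam mu : YoungDiagram}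
    (S : BorderRibbonStrip n lam mu) : ℕ :=
  (∑ i : Fin S.len, numComponents (stripCells S.strip i)) - 1

/-- The spin of a border ribbon strip. -/
def BorderRibbonStrip.spin {n : ℕ} {lam mu : YoungDiagram}
    (S : BorderRibbonStrip n lam mu) : ℕ :=
  ∑ i : Fin S.len, tilingSpin (S.strip i)

/-- The size (number of ribbons) of a border ribbon strip. -/
def BorderRibbonStrip.size {n : ℕ} {lam mu : YoungDiagram}
    (S : BorderRibbonStrip n lam mu) : ℕ :=
  ∑ i : Fin S.len, (S.strip i).card

/-- `𝒳^{mu/lam}_k(q) = Σ_S (-1)^{h(S)} q^{s(S)}` over border `n`-ribbon strips of shape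
`mu/lam` with `k` ribbons. -/
def chiX (n k : ℕ) (lam mu : YoungDiagram) : Polynomial ℤ :=
  ∑ᶠ S : BorderRibbonStrip n lam mu,
    if S.size = k then (-1) ^ S.height * Polynomial.X ^ S.spin else 0

/-- The complete homogeneous symmetric polynomial of degree `k` evaluated at the family `v`. -/
def hPoly {ι R : Type*} [Fintype ι] [DecidableEq ι] [CommSemiring R] (k : ℕ) (v : ι → R) : R :=
  ∑ d : Sym ι k, ((d : Multiset ι).map v).prod

/-- The elementary symmetric polynomial of degree `k` evaluated at the family `v`. -/
def ePoly {ι R : Type*} [Fintype ι] [DecidableEq ι] [CommSemiring R] (k : ℕ) (v : ι → R) : R :=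
  ∑ s ∈ Finset.univ.powersetCard k, ∏ i ∈ s, v i

/-- The alphabet `A_q(x) = {q^{2j} x_i : 1 ≤ i ≤ N, 0 ≤ j ≤ n-1}`. -/
def alphabetVal (n N : ℕ) : Fin N × Fin n → MvPolynomial (Fin N) (Polynomial ℤ) :=
  fun p => MvPolynomial.C (Polynomial.X ^ (2 * (p.2 : ℕ))) * MvPolynomial.X p.1

/-- The Schur function `s_lam` evaluated at the alphabet `A_q(x)`,
i.e. the plethysm `s_lam[(1+q²+⋯+q^{2n-2})X]` in `N` variables. -/
def schurAlph (n N : ℕ) (lam : YoungDiagram) : MvPolynomial (Fin N) (Polynomial ℤ) :=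
  MvPolynomial.aeval
    (fun t : Fin (n * N) => alphabetVal n N (Prod.swap (finProdFinEquiv.symm t)))
    (schurPoly (n * N) lam)

end

/-- A super `n`-ribbon tableau of shape `lam/mu`, with respect to a total order on the
two alphabets `A = {1 < ⋯ < N}` and `A' = {1' < ⋯ < M'}` recorded by the equivalence
`e : Fin (N + M) ≃ Fin N ⊕ Fin M` (position `t` in the total order is the letter `e t`):
a chain of partitions in which the letters of `A` contribute horizontal `n`-ribbon strips
and the letters of `A'` contribute vertical `n`-ribbon strips. -/
structure SuperRibbonTableau (n N M : ℕ) (e : Fin (N + M) ≃ (Fin N ⊕ Fin M))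
    (lam mu : YoungDiagram) where
  chain : Fin (N + M + 1) → YoungDiagram
  chain_zero : chain 0 = mu
  chain_last : chain (Fin.last (N + M)) = lam
  chain_mono : ∀ t : Fin (N + M), chain t.castSucc ≤ chain t.succ
  tiling : Fin (N + M) → Finset (Finset Cell)
  tiling_strip : ∀ t : Fin (N + M),
    Sum.elim
      (fun _ => IsHStripTiling n ((chain t.succ).cells \ (chain t.castSucc).cells) (tiling t))
      (fun _ => IsVStripTiling n ((chain t.succ).cells \ (chain t.castSucc).cells) (tiling t))
      (e t)

/-- The spin of a super ribbon tableau. -/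
noncomputable def SuperRibbonTableau.spin {n N M : ℕ} {e : Fin (N + M) ≃ (Fin N ⊕ Fin M)}
    {lam mu : YoungDiagram} (T : SuperRibbonTableau n N M e lam mu) : ℕ :=
  ∑ t : Fin (N + M), tilingSpin (T.tiling t)

/-- The super ribbon function `𝒢_{lam/mu}(X/Y;q)` as a polynomial in the variables
`x₁,…,x_N` (indexed by `Sum.inl`) and `y₁,…,y_M` (indexed by `Sum.inr`). -/
noncomputable def superRibbonFn (n N M : ℕ) (e : Fin (N + M) ≃ (Fin N ⊕ Fin M))
    (lam mu : YoungDiagram) : MvPolynomial (Fin N ⊕ Fin M) (Polynomial ℤ) :=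
  ∑ᶠ T : SuperRibbonTableau n N M e lam mu,
    MvPolynomial.C (Polynomial.X ^ T.spin) *
      ∏ t : Fin (N + M), MvPolynomial.X (e t) ^ (T.tiling t).card

namespace SuperRibbon

/-! ### Sums over lists of fixed length -/

/-- The sum of `F v` over all lists `v` of length `n` with entries in the finite type `L`. -/
def sumL {L K : Type*} [Fintype L] [AddCommMonoid K] : ℕ → (List L → K) → K
  | 0, F => F []
  | n + 1, F => ∑ l, sumL n (fun v => F (l :: v))

section sumL
variable {L K : Type*} [Fintype L]

theorem sumL_congr [AddCommMonoid K] {n : ℕ} {F G : List L → K}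
    (h : ∀ v, v.length = n → F v = G v) : sumL n F = sumL n G := by
  induction n generalizing F G with
  | zero => exact h [] rfl
  | succ n ih =>
    simp only [sumL]
    exact Finset.sum_congr rfl fun l _ => ih fun v hv => h _ (by simp [hv])

theorem sumL_snoc [AddCommMonoid K] (n : ℕ) (F : List L → K) :
    sumL (n + 1) F = sumL n (fun v => ∑ X, F (v ++ [X])) := by
  induction n generalizing F with
  | zero => simp [sumL]
  | succ n ih =>
    rw [sumL, Finset.sum_congr rfl fun l _ => ih _]
    rfl

theorem sumL_zero [AddCommMonoid K] (n : ℕ) : sumL n (fun _ : List L => (0 : K)) = 0 := by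
  induction n with
  | zero => rfl
  | succ n ih => simp [sumL, ih]

theorem sumL_add [AddCommMonoid K] (n : ℕ) (F G : List L → K) :
    sumL n (fun v => F v + G v) = sumL n F + sumL n G := by
  induction n generalizing F G with
  | zero => rfl
  | succ n ih => simp [sumL, ih, Finset.sum_add_distrib]

theorem sumL_sum [AddCommMonoid K] {ι : Type*} (n : ℕ) (s : Finset ι) (F : ι → List L → K) :
    sumL n (fun v => ∑ i ∈ s, F i v) = ∑ i ∈ s, sumL n (F i) := by
  induction s using Finset.induction_on with
  | empty => simp [sumL_zero]
  | insert a s ha ih => simp [Finset.sum_insert ha, sumL_add, ih]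

theorem mul_sumL [CommSemiring K] (n : ℕ) (a : K) (F : List L → K) :
    a * sumL n F = sumL n (fun v => a * F v) := by
  induction n generalizing F with
  | zero => rfl
  | succ n ih => simp [sumL, ih, Finset.mul_sum]

theorem sumL_eq_single [AddCommMonoid K] {n : ℕ} {F : List L → K} (w : List L)
    (hw : w.length = n) (h : ∀ v, v.length = n → v ≠ w → F v = 0) : sumL n F = F w := by
  induction n generalizing F w with
  | zero => rw [List.length_eq_zero_iff] at hw; subst hw; rfl
  | succ n ih =>
    obtain ⟨l, v, rfl⟩ : ∃ l v, w = l :: v := by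
      cases w with
      | nil => simp at hw
      | cons l v => exact ⟨l, v, rfl⟩
    rw [sumL, Finset.sum_eq_single l]
    · exact ih v (by simpa using hw) fun u hu hne => h _ (by simp [hu]) (by simpa using hne)
    · intro l' _ hl
      rw [← sumL_zero (L := L) n]
      exact sumL_congr fun u hu => h _ (by simp [hu]) (by simp [hl])
    · simp

end sumL

/-! ### The row transfer matrix and the two-row partition function -/

variable {K : Type*} [Field K]

/-- Partition function of one row of the lattice model.  `a` and `c` are the occupation lists
of the lower and the upper Maya diagram, read from the highest position downwards, and the
window `w` records for each of the next `n` positions whether a bead jumps onto it. -/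
def row (q x : K) : List Bool → List Bool → List Bool → K
  | a :: as, c :: cs, l :: v => ∑ X : Bool,
      if c.toNat + l.toNat = a.toNat + X.toNat ∧ c.toNat + l.toNat ≤ 1 then
        x ^ X.toNat * q ^ ((a.toNat + X.toNat) * v.count true) * row q x as cs (v ++ [X])
      else 0
  | [], [], w => if w.all not then 1 else 0
  | _, _, _ => 0

/-- The number of first flags set in a two-row window. -/
def nf (v : List (Bool × Bool)) : ℕ := (v.map Prod.fst).count true

/-- The number of second flags set in a two-row window. -/
def ng (v : List (Bool × Bool)) : ℕ := (v.map Prod.snd).count true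

/-- The number of pairs of positions with an earlier first flag and a later second flag. -/
def inv : List (Bool × Bool) → ℕ
  | [] => 0
  | l :: v => l.1.toNat * ng v + inv v

@[simp] theorem nf_nil : nf [] = 0 := rfl
@[simp] theorem ng_nil : ng [] = 0 := rfl
@[simp] theorem nf_cons (l v) : nf (l :: v) = nf v + l.1.toNat := by
  rcases l with ⟨a, b⟩; cases a <;> simp [nf]
@[simp] theorem ng_cons (l v) : ng (l :: v) = ng v + l.2.toNat := by
  rcases l with ⟨a, b⟩; cases b <;> simp [ng]
@[simp] theorem nf_snoc (v l) : nf (v ++ [l]) = nf v + l.1.toNat := by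
  rcases l with ⟨a, b⟩; cases a <;> simp [nf]
@[simp] theorem ng_snoc (v l) : ng (v ++ [l]) = ng v + l.2.toNat := by
  rcases l with ⟨a, b⟩; cases b <;> simp [ng]
theorem inv_snoc (v l) : inv (v ++ [l]) = inv v + l.2.toNat * nf v := by
  induction v with
  | nil => simp [inv]
  | cons m v ih => simp [inv, ih]; ring

/-- Local weight of the two-row model: the weight of pushing the letter `X` into a window
whose remaining letters have total flag weight `Q` and first flag weight `Y`. -/
def locW (x₁ x₂ Q Y : K) (l X : Bool × Bool) (a b : Bool) : K :=
  ∑ c : Bool,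
    if (c.toNat + l.1.toNat = a.toNat + X.1.toNat ∧ c.toNat + l.1.toNat ≤ 1) ∧
       (b.toNat + l.2.toNat = c.toNat + X.2.toNat ∧ b.toNat + l.2.toNat ≤ 1) then
      x₁ ^ X.1.toNat * x₂ ^ X.2.toNat * Q ^ (a.toNat + X.1.toNat + X.2.toNat) * Y ^ X.2.toNat
    else 0

/-- Partition function of two stacked rows, with the intermediate Maya diagram summed out. -/
def Zh (q x₁ x₂ : K) : List Bool → List Bool → List (Bool × Bool) → K
  | a :: as, b :: bs, l :: v => ∑ X : Bool × Bool,
      locW x₁ x₂ (q ^ (nf v + ng v)) ((q ^ 2)⁻¹ ^ nf v) l X a b * Zh q x₁ x₂ as bs (v ++ [X])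
  | [], [], w => if w.all (fun l => !l.1 && !l.2) then 1 else 0
  | _, _, _ => 0

/-- Two stacked rows are computed by `Zh`, up to a power of `q`. -/
theorem sumL_row_row {q : K} (hq : q ≠ 0) (x₁ x₂ : K) (a b : List Bool) (w : List (Bool × Bool)) :
    q ^ inv w * sumL a.length
      (fun c => row q x₁ a c (w.map Prod.fst) * row q x₂ c b (w.map Prod.snd)) =
      Zh q x₁ x₂ a b w := by
  induction a generalizing b w with
  | nil =>
    cases b with
    | nil =>
      simp only [sumL, row, Zh, List.length_nil]
      induction w with
      | nil => simp [inv]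
      | cons l w ih =>
        rcases l with ⟨_ | _, _ | _⟩
        all_goals simp_all [inv]
    | cons b bs => simp [sumL, row, Zh]
  | cons a as ih =>
    cases b with
    | nil =>
      rw [Zh, List.length_cons, sumL]
      · simp [row, sumL_zero]
      all_goals simp
    | cons b bs =>
      cases w with
      | nil =>
        rw [Zh, List.length_cons, sumL]
        · simp [row, sumL_zero]
        all_goals simp
      | cons l v =>
        have hZ : ∀ X : Bool × Bool, Zh q x₁ x₂ as bs (v ++ [X]) = q ^ inv (v ++ [X]) *
            sumL as.length (fun c => row q x₁ as c (v.map Prod.fst ++ [X.1]) *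
              row q x₂ c bs (v.map Prod.snd ++ [X.2])) := fun X => by
          rw [← ih]; simp
        simp only [Zh, hZ, List.length_cons, sumL, List.map_cons, row, locW]
        simp only [Finset.sum_mul_sum, Fintype.sum_prod_type, sumL_sum]
        simp only [Finset.mul_sum, Finset.sum_mul]
        rw [Finset.sum_comm]
        refine Finset.sum_congr rfl fun f _ => ?_
        rw [Finset.sum_comm]
        refine Finset.sum_congr rfl fun g _ => Finset.sum_congr rfl fun c _ => ?_
        by_cases h1 : c.toNat + l.1.toNat = a.toNat + f.toNat ∧ c.toNat + l.1.toNat ≤ 1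
        · by_cases h2 : b.toNat + l.2.toNat = c.toNat + g.toNat ∧ b.toNat + l.2.toNat ≤ 1
          · simp only [if_pos h1, if_pos h2, if_pos (And.intro h1 h2)]
            rw [mul_sumL, mul_sumL, mul_sumL]
            refine sumL_congr fun u _ => ?_
            have hc : ((v.map Prod.fst).count true) = nf v := rfl
            have hd : ((v.map Prod.snd).count true) = ng v := rfl
            rw [hc, hd, inv_snoc, inv]
            have hy : (((q ^ 2)⁻¹ ^ nf v) ^ g.toNat) = (q ^ (2 * nf v * g.toNat))⁻¹ := by
              rw [inv_pow, inv_pow, ← pow_mul, ← pow_mul, mul_assoc]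
            have he : (l.1.toNat * ng v + inv v + (a.toNat + f.toNat) * nf v +
                (c.toNat + g.toNat) * ng v) + 2 * nf v * g.toNat =
                (nf v + ng v) * (a.toNat + f.toNat + g.toNat) + (inv v + g.toNat * nf v) := by
              rw [← h1.1]
              ring
            have he' := congrArg (q ^ ·) he
            rw [pow_add _ _ (2 * nf v * g.toNat), pow_add _ (_ * _)] at he'
            rw [hy, ← pow_mul]
            have hne : q ^ (2 * nf v * g.toNat) ≠ 0 := pow_ne_zero _ hq
            rw [← mul_right_inj' hne]
            have hi : q ^ (2 * nf v * g.toNat) * (q ^ (2 * nf v * g.toNat))⁻¹ = 1 :=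
              mul_inv_cancel₀ hne
            generalize q ^ (2 * nf v * g.toNat) = t at *
            generalize t⁻¹ = t' at *
            have e4 : q ^ (l.1.toNat * ng v + inv v + (a.toNat + f.toNat) * nf v +
                (c.toNat + g.toNat) * ng v) = q ^ (l.1.toNat * ng v + inv v) *
                q ^ ((a.toNat + f.toNat) * nf v) * q ^ ((c.toNat + g.toNat) * ng v) := by
              rw [pow_add, pow_add]
            rw [e4] at he'
            generalize q ^ ((nf v + ng v) * (a.toNat + f.toNat + g.toNat)) = A1 at *
            generalize q ^ (l.1.toNat * ng v + inv v) = A2 at *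
            generalize q ^ ((a.toNat + f.toNat) * nf v) = A3 at *
            generalize q ^ ((c.toNat + g.toNat) * ng v) = A4 at *
            generalize q ^ (inv v + g.toNat * nf v) = A5 at *
            linear_combination (x₁ ^ f.toNat * x₂ ^ g.toNat *
              row q x₁ as u (v.map Prod.fst ++ [f]) * row q x₂ u bs (v.map Prod.snd ++ [g])) * he'
               - A1 * A5 * (x₁ ^ f.toNat * x₂ ^ g.toNat *
              row q x₁ as u (v.map Prod.fst ++ [f]) * row q x₂ u bs (v.map Prod.snd ++ [g])) * hi
          · simp [h2, sumL_zero]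
        · simp [h1, sumL_zero]
end SuperRibbon

namespace SuperRibbon
variable {K : Type*} [Field K]

/-! ### The exchange relation -/

/-- One-letter exchange coefficients. -/
def gf (ζ : K) : Bool × Bool → Bool × Bool → K
  | (false, false), (false, false) => 1
  | (false, true), (false, true) => 1
  | (true, true), (true, true) => ζ
  | (true, false), (true, false) => ζ
  | (true, false), (false, true) => 1 - ζ
  | _, _ => 0

/-- Exchange coefficients between two windows, built up from the right. -/
def cf (y z : K) : List (Bool × Bool) → List (Bool × Bool) → K
  | [], [] => 1
  | l :: v, l' :: v' => cf y z v v' * gf (z * y ^ (nf v - nf v')) l l'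
  | _, _ => 0

/-- The factor acquired by `cf` when letters are appended at the right ends, where `Y` and `A`
stand for `y ^ nf v'` and `y ^ (nf v - nf v')`. -/
def hf (z Y A : K) : Bool × Bool → Bool × Bool → K
  | (false, false), (false, false) => 1
  | (false, true), (false, true) => 1
  | (true, true), (true, true) => z
  | (true, false), (true, false) => z
  | (true, false), (false, true) => Y * (1 - z * A)
  | _, _ => 0

theorem cf_ne_zero {y z : K} {v v' : List (Bool × Bool)} (h : cf y z v v' ≠ 0) :
    nf v' ≤ nf v ∧ nf v + ng v = nf v' + ng v' := by
  induction v generalizing v' with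
  | nil =>
    cases v' with
    | nil => simp
    | cons => simp [cf] at h
  | cons l v ih =>
    cases v' with
    | nil => simp [cf] at h
    | cons l' v' =>
      rw [cf] at h
      have h1 := ih (left_ne_zero_of_mul h)
      have h2 := right_ne_zero_of_mul h
      rcases l with ⟨_ | _, _ | _⟩ <;> rcases l' with ⟨_ | _, _ | _⟩ <;> simp [gf] at h2 ⊢ <;> omega

theorem cf_snoc (y z : K) (v v' : List (Bool × Bool)) (hv : v.length = v'.length)
    (X X' : Bool × Bool) :
    cf y z (v ++ [X]) (v' ++ [X']) =
      cf y z v v' * hf z (y ^ nf v') (y ^ (nf v - nf v')) X X' := by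
  induction v generalizing v' with
  | nil =>
    cases v' with
    | nil =>
      rcases X with ⟨_ | _, _ | _⟩ <;> rcases X' with ⟨_ | _, _ | _⟩ <;> simp [cf, hf, gf]
    | cons => simp at hv
  | cons l v ih =>
    cases v' with
    | nil => simp at hv
    | cons l' v' =>
      simp only [List.cons_append, cf]
      rw [ih v' (by simpa using hv)]
      by_cases h0 : cf y z v v' = 0
      · simp [h0]
      obtain ⟨hle, -⟩ := cf_ne_zero h0
      obtain ⟨k, hk⟩ := Nat.exists_eq_add_of_le hle
      simp only [nf_snoc, nf_cons, hk]
      generalize nf v' = m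
      have e1 : m + k - m = k := by omega
      have e2 : m + k + 1 - m = k + 1 := by omega
      rcases X with ⟨_ | _, _ | _⟩ <;> rcases X' with ⟨_ | _, _ | _⟩ <;>
        simp only [hf, mul_zero, zero_mul, mul_one, Bool.toNat_true, Bool.toNat_false, add_zero,
          Nat.add_sub_add_right, e1, e2]
      · rcases l with ⟨_ | _, _ | _⟩ <;> rcases l' with ⟨_ | _, _ | _⟩ <;>
          simp only [gf, mul_zero, zero_mul, Bool.toNat_true, Bool.toNat_false, add_zero,
            Nat.add_sub_add_right, e1, e2] <;> ring
      · ring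
      · ring

theorem locW_eq (x₁ x₂ Q Y : K) (l X : Bool × Bool) (a b : Bool) :
    locW x₁ x₂ Q Y l X a b =
      if ∃ c : Bool, (c.toNat + l.1.toNat = a.toNat + X.1.toNat ∧ c.toNat + l.1.toNat ≤ 1) ∧
       (b.toNat + l.2.toNat = c.toNat + X.2.toNat ∧ b.toNat + l.2.toNat ≤ 1) then
      x₁ ^ X.1.toNat * x₂ ^ X.2.toNat * Q ^ (a.toNat + X.1.toNat + X.2.toNat) * Y ^ X.2.toNat
    else 0 := by
  rw [locW]
  split_ifs with h
  · obtain ⟨c, hc⟩ := h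
    rw [Finset.sum_eq_single c, if_pos hc]
    · intro c' _ hne
      refine if_neg fun h' => hne ?_
      have h1 := h'.1.1
      rw [← hc.1.1] at h1
      cases c <;> cases c' <;> simp at h1 ⊢
    · simp
  · exact Finset.sum_eq_zero fun c _ => if_neg fun hc => h ⟨c, hc⟩

set_option maxHeartbeats 2000000 in
/-- The local exchange identity, a finite check. -/
theorem locW_exchange (x₁ x₂ z : K) (hz : x₂ = z * x₁) (Q Y A : K) (l X' : Bool × Bool)
    (a b : Bool) :
    ∑ X, locW x₁ x₂ Q (A * Y) l X a b * hf z Y A X X' =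
      ∑ l', gf (z * A) l l' * locW x₂ x₁ Q Y l' X' a b := by
  subst hz
  rcases l with ⟨_ | _, _ | _⟩ <;> rcases X' with ⟨_ | _, _ | _⟩ <;> cases a <;> cases b <;>
    simp [Fintype.sum_prod_type, locW_eq, hf, gf] <;> ring

/-- The coefficients `cf` intertwine the two-row partition functions with the row parameters in
the two possible orders. -/
theorem Zh_exchange {q x₁ x₂ z : K} (hz : x₂ = z * x₁) (a b : List Bool)
    (w : List (Bool × Bool)) :
    Zh q x₁ x₂ a b w =
      sumL w.length (fun w' => cf (q ^ 2)⁻¹ z w w' * Zh q x₂ x₁ a b w') := by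
  induction a generalizing b w with
  | nil =>
    cases b with
    | cons b bs =>
      simp [Zh, sumL_zero]
    | nil =>
      simp only [Zh]
      induction w with
      | nil => simp [sumL, cf]
      | cons l v ih =>
        have hs : ∀ l' : Bool × Bool, sumL v.length (fun v' =>
            cf (q ^ 2)⁻¹ z (l :: v) (l' :: v') *
              if (l' :: v').all (fun l => !l.1 && !l.2) then 1 else 0) =
            (if l' = (false, false) ∧ l = (false, false) then
              if v.all (fun l => !l.1 && !l.2) then 1 else 0 else 0) := by
          intro l'
          by_cases hl : l' = (false, false) ∧ l = (false, false)
          · obtain ⟨rfl, rfl⟩ := hl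
            rw [if_pos ⟨rfl, rfl⟩, ih]
            exact sumL_congr fun v' _ => by simp [cf, gf]
          · rw [if_neg hl]
            refine (sumL_congr fun v' _ => ?_).trans (sumL_zero _)
            rcases l with ⟨_ | _, _ | _⟩ <;> rcases l' with ⟨_ | _, _ | _⟩ <;> simp [cf, gf] at hl ⊢
        rw [List.length_cons, sumL, Finset.sum_congr rfl fun l' _ => hs l']
        rcases l with ⟨_ | _, _ | _⟩ <;> simp [Fintype.sum_prod_type]
  | cons a as ih =>
    cases b with
    | nil =>
      have h0 : ∀ x₁ x₂ w, Zh q x₁ x₂ (a :: as) [] w = 0 := fun x₁ x₂ w => by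
        cases w <;> rfl
      simp [h0, sumL_zero]
    | cons b bs =>
      cases w with
      | nil => simp [sumL, Zh]
      | cons l v =>
        have key : ∀ v' : List (Bool × Bool), v'.length = v.length → ∀ X',
            ∑ X, locW x₁ x₂ (q ^ (nf v + ng v)) ((q ^ 2)⁻¹ ^ nf v) l X a b *
              cf (q ^ 2)⁻¹ z (v ++ [X]) (v' ++ [X']) =
            ∑ l', cf (q ^ 2)⁻¹ z (l :: v) (l' :: v') *
              locW x₂ x₁ (q ^ (nf v' + ng v')) ((q ^ 2)⁻¹ ^ nf v') l' X' a b := by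
          intro v' hv' X'
          simp only [cf, cf_snoc _ _ _ _ hv'.symm]
          by_cases h0 : cf (q ^ 2)⁻¹ z v v' = 0
          · simp [h0]
          obtain ⟨hle, he⟩ := cf_ne_zero h0
          have hp : ((q ^ 2)⁻¹ ^ nf v) = (q ^ 2)⁻¹ ^ (nf v - nf v') * (q ^ 2)⁻¹ ^ nf v' := by
            rw [← pow_add, Nat.sub_add_cancel hle]
          have := locW_exchange x₁ x₂ z hz (q ^ (nf v + ng v)) ((q ^ 2)⁻¹ ^ nf v')
            ((q ^ 2)⁻¹ ^ (nf v - nf v')) l X' a b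
          rw [← hp] at this
          rw [← he]
          calc _ = cf (q ^ 2)⁻¹ z v v' * ∑ X, locW x₁ x₂ (q ^ (nf v + ng v))
                ((q ^ 2)⁻¹ ^ nf v) l X a b *
                hf z ((q ^ 2)⁻¹ ^ nf v') ((q ^ 2)⁻¹ ^ (nf v - nf v')) X X' := by
                rw [Finset.mul_sum]; exact Finset.sum_congr rfl fun X _ => by ring
            _ = _ := by
                rw [this, Finset.mul_sum]; exact Finset.sum_congr rfl fun X _ => by ring
        rw [Zh, List.length_cons, sumL]
        calc _ = ∑ X, sumL v.length (fun v' => ∑ X', locW x₁ x₂ (q ^ (nf v + ng v))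
                  ((q ^ 2)⁻¹ ^ nf v) l X a b * cf (q ^ 2)⁻¹ z (v ++ [X]) (v' ++ [X']) *
                  Zh q x₂ x₁ as bs (v' ++ [X'])) := by
              refine Finset.sum_congr rfl fun X _ => ?_
              rw [ih, List.length_append, List.length_singleton, sumL_snoc, mul_sumL]
              refine sumL_congr fun v' _ => ?_
              rw [Finset.mul_sum]
              exact Finset.sum_congr rfl fun X' _ => by ring
          _ = ∑ l', sumL v.length (fun v' => ∑ X', cf (q ^ 2)⁻¹ z (l :: v) (l' :: v') *
                locW x₂ x₁ (q ^ (nf v' + ng v')) ((q ^ 2)⁻¹ ^ nf v') l' X' a b *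
                  Zh q x₂ x₁ as bs (v' ++ [X'])) := by
              rw [← sumL_sum, ← sumL_sum]
              refine sumL_congr fun v' hv' => ?_
              rw [Finset.sum_comm]
              refine Eq.trans ?_ Finset.sum_comm
              refine Finset.sum_congr rfl fun X' _ => ?_
              rw [← Finset.sum_mul, ← Finset.sum_mul, key v' hv' X']
          _ = _ := by
              refine Finset.sum_congr rfl fun l' _ => sumL_congr fun v' _ => ?_
              rw [Zh, Finset.mul_sum]
              exact Finset.sum_congr rfl fun X' _ => by ring

theorem cf_replicate (y z : K) (n : ℕ) (w' : List (Bool × Bool)) (hn : w'.length = n) :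
    cf y z (List.replicate n (false, false)) w' =
      if w' = List.replicate n (false, false) then 1 else 0 := by
  induction n generalizing w' with
  | zero => rw [List.length_eq_zero_iff] at hn; simp [hn, cf]
  | succ n ih =>
    cases w' with
    | nil => simp at hn
    | cons l v =>
      have := ih v (by simpa using hn)
      rw [List.replicate_succ, cf, this]
      rcases l with ⟨_ | _, _ | _⟩ <;> simp +contextual [gf]

/-- Two rows with empty initial window commute. -/
theorem sumL_row_comm {q x₁ x₂ : K} (hq : q ≠ 0) (h₁ : x₁ ≠ 0) (n : ℕ) (a b : List Bool) :
    sumL a.length (fun c => row q x₁ a c (List.replicate n false) *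
        row q x₂ c b (List.replicate n false)) =
      sumL a.length (fun c => row q x₂ a c (List.replicate n false) *
        row q x₁ c b (List.replicate n false)) := by
  have hz : x₂ = (x₂ / x₁) * x₁ := by field_simp
  have h := Zh_exchange (q := q) hz a b (List.replicate n (false, false))
  rw [List.length_replicate, sumL_eq_single (List.replicate n (false, false)) (by simp)
    (fun v hv hne => by rw [cf_replicate _ _ _ _ hv, if_neg hne, zero_mul]),
    cf_replicate _ _ _ _ (by simp), if_pos rfl, one_mul, ← sumL_row_row hq, ← sumL_row_row hq] at h
  simpa [pow_ne_zero _ hq] using h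

end SuperRibbon

namespace SuperRibbon

/-! ### From bead jumps to the row model -/

/-- Generating function of the ways to pass from the occupation list `e` to the occupation
list `a` by jumps of beads over `m` positions onto an empty position `m + 1` places further on,
where each position is treated once, in order.  A jump has weight `x` times `q` to the number
of beads jumped over. -/
def P {K : Type*} [CommRing K] (q x : K) (m : ℕ) : List Bool → List Bool → K
  | [], [] => 1
  | a :: as, e :: es =>
      (if a = e then P q x m as es else 0) +
      (if a = false ∧ e = true ∧ es[m]? = some false then
        x * q ^ (es.take m).count true * P q x m as (es.set m true) else 0)
  | _, _ => 0

/-- The window `w` is compatible with `c`: jumping beads land on empty positions of `c`. -/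
def Cp : List Bool → List Bool → Prop
  | [], _ => True
  | w :: ws, [] => w = false ∧ Cp ws []
  | w :: ws, c :: cs => ¬ (w = true ∧ c = true) ∧ Cp ws cs

/-- The occupation list obtained by adding the beads of the window `w` to `c`. -/
def comb : List Bool → List Bool → List Bool
  | [], c => c
  | _ :: _, [] => []
  | w :: ws, c :: cs => (w || c) :: comb ws cs

/-- Exponent relating the row weights to the spin weights. -/
def kap : List Bool → List Bool → ℕ
  | w :: ws, c :: cs => (c.toNat + w.toNat) * ws.count true + kap ws cs
  | _, _ => 0

theorem Cp_snoc (v : List Bool) (X : Bool) (c : List Bool) :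
    Cp (v ++ [X]) c ↔ Cp v c ∧ (X = true → (c)[v.length]? = some false) := by
  induction v generalizing c with
  | nil => cases c <;> simp [Cp]
  | cons w v ih => cases c <;> simp [Cp, ih, and_assoc]

theorem comb_snoc_false (v c : List Bool) : comb (v ++ [false]) c = comb v c := by
  induction v generalizing c with
  | nil => cases c <;> simp [comb]
  | cons w v ih => cases c <;> simp [comb, ih]

theorem comb_snoc_true (v c : List Bool) :
    comb (v ++ [true]) c = (comb v c).set v.length true := by
  induction v generalizing c with
  | nil => cases c <;> simp [comb]
  | cons w v ih => cases c <;> simp [comb, ih]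

theorem comb_getElem? (v c : List Bool) : (comb v c)[v.length]? = (c)[v.length]? := by
  induction v generalizing c with
  | nil => simp [comb]
  | cons w v ih => cases c <;> simp [comb, ih]

theorem kap_snoc_false (v c : List Bool) : kap (v ++ [false]) c = kap v c := by
  induction v generalizing c with
  | nil => cases c <;> simp [kap]
  | cons w v ih => cases c <;> simp [kap, ih]

theorem kap_snoc_true (v c : List Bool) (hc : v.length ≤ c.length) (h : Cp v c) :
    kap (v ++ [true]) c = kap v c + ((comb v c).take v.length).count true := by
  induction v generalizing c with
  | nil => cases c <;> simp [kap]
  | cons w v ih =>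
    cases c with
    | nil => simp at hc
    | cons c cs =>
      have := ih cs (by simpa using hc) h.2
      have h1 := h.1
      cases w <;> cases c <;> simp [kap, comb, this] at h1 ⊢ <;> omega

variable {K : Type*} [Field K]

/-- A row with window `w` is a bead jump generating function for the list in which the pending
beads of `w` have already landed. -/
theorem row_eq_P (q x : K) (m : ℕ) (a c w : List Bool) (hw : w.length = m + 1) :
    row q x a c w = if Cp w c then P q x m a (comb w c) * q ^ kap w c else 0 := by
  induction a generalizing c w with
  | nil =>
    cases c with
    | nil =>
      have h1 : comb w [] = [] := by cases w <;> rfl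
      have h2 : kap w [] = 0 := by cases w <;> rfl
      have h3 : Cp w [] ↔ w.all not = true := by
        clear hw h1 h2
        induction w with
        | nil => simp [Cp]
        | cons w ws ih => simp [Cp, ih]
      simp [row, h1, h2, P, h3]
    | cons c cs =>
      obtain ⟨l, v, rfl⟩ := List.exists_cons_of_length_eq_add_one hw
      simp [row, comb, P]
  | cons a as ih =>
    obtain ⟨l, v, rfl⟩ := List.exists_cons_of_length_eq_add_one hw
    cases c with
    | nil => simp [row, comb, P]
    | cons c cs =>
      have hv : v.length = m := by simpa using hw
      simp only [row]
      rw [Finset.sum_congr rfl fun X _ => by rw [ih cs (v ++ [X]) (by simp [hv])]]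
      rw [Fintype.sum_bool]
      simp only [Cp_snoc, comb_snoc_false, comb_snoc_true, kap_snoc_false, comb, P, Cp, kap]
      have hg := comb_getElem? v cs
      rw [hv] at hg
      rw [hg, hv]
      by_cases hcp : Cp v cs
      swap
      · simp [hcp]
      by_cases hm : cs[m]? = some false
      · have hlen : v.length ≤ cs.length := by
          by_contra hlt
          rw [List.getElem?_eq_none (by omega)] at hm
          simp at hm
        have hk := kap_snoc_true v cs hlen hcp
        rw [hv] at hk
        rw [hk]
        cases c <;> cases l <;> cases a <;> simp [hcp, hm, pow_add] <;> ring
      · cases c <;> cases l <;> cases a <;> simp [hcp, hm, pow_add] <;> ring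

theorem P_eq_row (q x : K) (m : ℕ) (a c : List Bool) :
    P q x m a c = row q x a c (List.replicate (m + 1) false) := by
  have h1 : ∀ n c, comb (List.replicate n false) c = c := by
    intro n
    induction n with
    | zero => intro c; rfl
    | succ n ih => intro c; cases c <;> simp [List.replicate_succ, comb, ih]
  have h2 : ∀ n c, Cp (List.replicate n false) c := by
    intro n
    induction n with
    | zero => intro c; trivial
    | succ n ih => intro c; cases c <;> simp [List.replicate_succ, Cp, ih]
  have h3 : ∀ n c, kap (List.replicate n false) c = 0 := by
    intro n
    induction n with
    | zero => intro c; rfl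
    | succ n ih => intro c; cases c <;> simp [List.replicate_succ, kap, ih, List.count_replicate]
  rw [row_eq_P q x m _ _ _ (by simp), h1, h3, if_pos (h2 _ _)]
  simp

/-- The bead-jump operators with different parameters commute. -/
theorem sumL_P_comm {q x₁ x₂ : K} (hq : q ≠ 0) (h₁ : x₁ ≠ 0) (m : ℕ) (a b : List Bool) :
    sumL a.length (fun c => P q x₁ m a c * P q x₂ m c b) =
      sumL a.length (fun c => P q x₂ m a c * P q x₁ m c b) := by
  simp only [P_eq_row]
  exact sumL_row_comm hq h₁ _ _ _

end SuperRibbon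

namespace SuperRibbon

/-! ### Diagonal profile of a Young diagram -/

theorem exists_not_mem_diag (β : YoungDiagram) (t : ℤ) :
    ∃ r : ℕ, 0 ≤ (r : ℤ) + t ∧ (r, ((r : ℤ) + t).toNat) ∉ β := by
  refine ⟨β.colLen 0 + t.natAbs, by omega, fun h => ?_⟩
  have := β.up_left_mem le_rfl (Nat.zero_le _) h
  rw [YoungDiagram.mem_iff_lt_colLen] at this
  omega

/-- The row in which the diagonal of content `t` (columns extended to the left by negative
ones) leaves the diagram `β`.  The diagram is recovered as `{(i, j) | i < rho β (j - i)}`, and the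
consecutive differences of `rho β` are the entries of the Maya diagram of `β`. -/
noncomputable def rho (β : YoungDiagram) (t : ℤ) : ℕ := Nat.find (exists_not_mem_diag β t)

theorem lt_rho {β : YoungDiagram} {t : ℤ} {r : ℕ} :
    r < rho β t ↔ (r : ℤ) + t < 0 ∨ (r, ((r : ℤ) + t).toNat) ∈ β := by
  constructor
  · intro h
    have := Nat.find_min (exists_not_mem_diag β t) h
    by_contra hc
    push Not at hc
    exact this hc
  · intro h
    by_contra hc
    push Not at hc
    have hs : 0 ≤ (rho β t : ℤ) + t ∧ (rho β t, ((rho β t : ℤ) + t).toNat) ∉ β :=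
      Nat.find_spec (exists_not_mem_diag β t)
    rcases h with h | h
    · omega
    · exact hs.2 (β.up_left_mem hc (by omega) h)

theorem mem_iff_rho {β : YoungDiagram} {i j : ℕ} : (i, j) ∈ β ↔ i < rho β ((j : ℤ) - i) := by
  rw [lt_rho]
  have h1 : ((i : ℤ) + (j - i)).toNat = j := by omega
  have h2 : ¬ ((i : ℤ) + (j - i) < 0) := by omega
  rw [h1]
  tauto

theorem rho_ge (β : YoungDiagram) (t : ℤ) : -t ≤ rho β t := by
  by_contra h
  push Not at h
  have : rho β t < rho β t := lt_rho.2 (Or.inl (by omega))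
  omega

theorem rho_succ_le (β : YoungDiagram) (t : ℤ) : rho β (t + 1) ≤ rho β t := by
  by_contra h
  push Not at h
  rcases lt_rho.1 h with h | h
  · have := rho_ge β t; omega
  · have : rho β t < rho β t :=
      lt_rho.2 (Or.inr (β.up_left_mem le_rfl (by omega) h))
    omega

theorem rho_le_succ (β : YoungDiagram) (t : ℤ) : rho β t ≤ rho β (t + 1) + 1 := by
  by_contra h
  push Not at h
  have h0 := rho_ge β (t + 1)
  rcases lt_rho.1 h with h | h
  · push_cast at h; omega
  · have : rho β (t + 1) < rho β (t + 1) :=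
      lt_rho.2 (Or.inr (β.up_left_mem (Nat.le_succ _) (by push_cast; omega) h))
    omega

theorem rho_ext {β γ : YoungDiagram} (h : ∀ t, rho β t = rho γ t) : β = γ := by
  ext ⟨i, j⟩
  simp only [YoungDiagram.mem_cells, mem_iff_rho, h]

theorem le_iff_rho {β γ : YoungDiagram} : β ≤ γ ↔ ∀ t, rho β t ≤ rho γ t := by
  constructor
  · intro h t
    by_contra hc
    push Not at hc
    rcases lt_rho.1 hc with h' | h'
    · have := rho_ge γ t; omega
    · have : rho γ t < rho γ t := lt_rho.2 (Or.inr (h h'))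
      omega
  · rintro h ⟨i, j⟩ hc
    rw [mem_iff_rho] at hc ⊢
    exact hc.trans_le (h _)

theorem exists_rho_eq (β : YoungDiagram) (f : ℤ → ℕ) (h1 : ∀ t, f (t + 1) ≤ f t)
    (h2 : ∀ t, f t ≤ f (t + 1) + 1) (h3 : ∀ t, -t ≤ f t) (h4 : ∀ t, f t ≤ rho β t) :
    ∃ γ : YoungDiagram, ∀ t, rho γ t = f t := by
  have hanti : Antitone f := antitone_int_of_succ_le h1
  have hd : ∀ (d : ℕ) t, f t ≤ f (t + d) + d := by
    intro d
    induction d with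
    | zero => simp
    | succ d ih =>
      intro t
      have := ih t
      have := h2 (t + d)
      rw [show t + ((d + 1 : ℕ) : ℤ) = t + d + 1 by push_cast; ring]
      omega
  let γ : YoungDiagram :=
    { cells := β.cells.filter (fun c => c.1 < f ((c.2 : ℤ) - c.1))
      isLowerSet := by
        rintro ⟨i, j⟩ ⟨i', j'⟩ hle hc
        obtain ⟨hi, hj⟩ : i' ≤ i ∧ j' ≤ j := hle
        simp only [Finset.coe_filter, YoungDiagram.mem_cells, Set.mem_ofPred_eq] at hc ⊢
        refine ⟨β.up_left_mem hi hj hc.1, ?_⟩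
        have e1 := hd (i - i') ((j : ℤ) - i)
        have e2 : f ((j : ℤ) - i + (i - i' : ℕ)) ≤ f ((j' : ℤ) - i') := hanti (by omega)
        have := hc.2
        omega }
  refine ⟨γ, fun t => eq_of_forall_lt_iff fun r => ?_⟩
  have hγ : ∀ i j, (i, j) ∈ γ ↔ (i, j) ∈ β ∧ i < f ((j : ℤ) - i) := by
    intro i j
    rw [← YoungDiagram.mem_cells]
    exact Finset.mem_filter
  rw [lt_rho, hγ]
  by_cases hr : (r : ℤ) + t < 0
  · have := h3 t
    simp only [hr, true_or, true_iff]; omega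
  · have e : ((((r : ℤ) + t).toNat : ℤ) - r) = t := by omega
    rw [e]
    constructor
    · rintro (h | h)
      · exact absurd h hr
      · exact h.2
    · intro h
      refine Or.inr ⟨?_, h⟩
      have := lt_rho.1 (h.trans_le (h4 t))
      tauto

/-- Content bound of a diagram. -/
noncomputable def bd (β : YoungDiagram) : ℕ := β.colLen 0 + β.rowLen 0 + 1

theorem content_lt_bd {β lam : YoungDiagram} (h : β ≤ lam) {i j : ℕ} (hc : (i, j) ∈ β) :
    -(bd lam : ℤ) < (j : ℤ) - i ∧ (j : ℤ) - i < bd lam := by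
  have hc' : (i, j) ∈ lam := h hc
  have h1 := lam.up_left_mem le_rfl (Nat.zero_le _) hc'
  have h2 := lam.up_left_mem (Nat.zero_le _) le_rfl hc'
  rw [YoungDiagram.mem_iff_lt_colLen] at h1
  rw [YoungDiagram.mem_iff_lt_rowLen] at h2
  rw [bd]
  omega

theorem rho_out {β lam : YoungDiagram} (h : β ≤ lam) {t : ℤ}
    (ht : t ≤ -(bd lam : ℤ) ∨ (bd lam : ℤ) ≤ t) : rho β t = (-t).toNat := by
  refine eq_of_forall_lt_iff fun r => ?_
  rw [lt_rho]
  constructor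
  · rintro (h' | h')
    · omega
    · have := content_lt_bd h h'
      omega
  · intro h'
    left; omega

/-- Position `p` of the Maya diagram of `β` carries a bead. -/
def occ (β : YoungDiagram) (p : ℤ) : Prop := rho β (p - 1) = rho β p + 1

theorem not_occ {β : YoungDiagram} {p : ℤ} : ¬ occ β p ↔ rho β (p - 1) = rho β p := by
  have h1 := rho_succ_le β (p - 1)
  have h2 := rho_le_succ β (p - 1)
  rw [sub_add_cancel] at h1 h2
  rw [occ]; omega

theorem occ_left {β lam : YoungDiagram} (h : β ≤ lam) {p : ℤ} (hp : p ≤ -(bd lam : ℤ)) :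
    occ β p := by
  rw [occ, rho_out h (by omega), rho_out h (by omega)]; omega

theorem not_occ_right {β lam : YoungDiagram} (h : β ≤ lam) {p : ℤ} (hp : (bd lam : ℤ) < p) :
    ¬ occ β p := by
  rw [not_occ, rho_out h (by omega), rho_out h (by omega)]; omega

theorem occ_inj {β γ lam : YoungDiagram} (hβ : β ≤ lam) (hγ : γ ≤ lam)
    (h : ∀ p, -(bd lam : ℤ) < p → p ≤ bd lam → (occ β p ↔ occ γ p)) : β = γ := by
  refine rho_ext fun t => ?_
  have h' : ∀ p, occ β p ↔ occ γ p := by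
    intro p
    by_cases h1 : p ≤ -(bd lam : ℤ)
    · simp [occ_left hβ h1, occ_left hγ h1]
    by_cases h2 : (bd lam : ℤ) < p
    · simp [not_occ_right hβ h2, not_occ_right hγ h2]
    exact h p (by omega) (by omega)
  have key : ∀ d : ℕ, rho β (bd lam - d) = rho γ (bd lam - d) := by
    intro d
    induction d with
    | zero => rw [rho_out hβ (by omega), rho_out hγ (by omega)]
    | succ d ih =>
      have e : (bd lam : ℤ) - (d + 1 : ℕ) = (bd lam - d) - 1 := by push_cast; ring
      rw [e]
      have := h' (bd lam - d)
      by_cases ho : occ β (bd lam - d)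
      · have ho' := this.1 ho
        rw [occ] at ho ho'; omega
      · have ho' : ¬ occ γ (bd lam - d) := fun x => ho (this.2 x)
        rw [not_occ] at ho ho'; omega
  by_cases ht : (bd lam : ℤ) ≤ t
  · rw [rho_out hβ (by omega), rho_out hγ (by omega)]
  · have := key ((bd lam : ℤ) - t).toNat
    rwa [show (bd lam : ℤ) - (((bd lam : ℤ) - t).toNat : ℤ) = t by omega] at this

end SuperRibbon

namespace SuperRibbon

/-! ### Ribbons -/

/-- The content of a cell. -/
def ct (c : Cell) : ℤ := (c.2 : ℤ) - c.1

theorem Adj.ct_eq {a b : Cell} (h : Adj a b) : ct b = ct a + 1 ∨ ct b = ct a - 1 := by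
  unfold ct; rcases h with ⟨h1, h2 | h2⟩ | ⟨h1, h2 | h2⟩ <;> omega

/-- The shape of an `n`-ribbon whose largest content is `h`: one cell of each content in
`(h - n, h]`, and cells of consecutive contents are adjacent. -/
structure IsRib (n : ℕ) (h : ℤ) (R : Finset Cell) : Prop where
  inj : ∀ x ∈ R, ∀ y ∈ R, ct x = ct y → x = y
  range : ∀ x ∈ R, h - n < ct x ∧ ct x ≤ h
  surj : ∀ t, h - n < t → t ≤ h → ∃ x ∈ R, ct x = t
  adj : ∀ x ∈ R, ∀ y ∈ R, ct y = ct x + 1 → y = (x.1, x.2 + 1) ∨ x = (y.1 + 1, y.2)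

/-- A path from content at most `t` to content above `t` has a step from `t` to `t + 1`. -/
theorem exists_crossing {R : Finset Cell} {a b : Cell} (ha : a ∈ R) (hab : Reach R a b)
    {t : ℤ} (hat : ct a ≤ t) (hbt : t < ct b) :
    ∃ y ∈ R, ∃ y' ∈ R, Adj y y' ∧ ct y = t ∧ ct y' = t + 1 := by
  suffices H : b ∈ R ∧ (t < ct b → ∃ y ∈ R, ∃ y' ∈ R, Adj y y' ∧ ct y = t ∧ ct y' = t + 1) from
    H.2 hbt
  clear hbt
  unfold Reach at hab
  induction hab with
  | refl => exact ⟨ha, fun h => by omega⟩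
  | @tail b c _ hbc ih =>
    refine ⟨hbc.1, fun h => ?_⟩
    by_cases hb : t < ct b
    · exact ih.2 hb
    · rcases Adj.ct_eq hbc.2 with h' | h'
      · exact ⟨b, ih.1, c, hbc.1, hbc.2, by omega, by omega⟩
      · omega

theorem IsRibbon.exists_isRib {n : ℕ} (hn : 1 ≤ n) {R : Finset Cell} (hR : IsRibbon n R) :
    ∃ h, IsRib n h R := by
  obtain ⟨hcard, hconn, hsq, lam, mu, -, hskew⟩ := hR
  have hconv : ∀ i j k l i' j', (i, j) ∈ R → (k, l) ∈ R → i ≤ i' → i' ≤ k → j ≤ j' → j' ≤ l →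
      (i', j') ∈ R := by
    intro i j k l i' j' h1 h2 h3 h4 h5 h6
    rw [hskew, Finset.mem_sdiff, YoungDiagram.mem_cells, YoungDiagram.mem_cells] at *
    exact ⟨lam.up_left_mem h4 h6 h2.1, fun h => h1.2 (mu.up_left_mem h3 h5 h)⟩
  have hinj' : ∀ x ∈ R, ∀ y ∈ R, ct x = ct y → ¬ x.1 < y.1 := by
    rintro ⟨i, j⟩ hx ⟨k, l⟩ hy hxy hlt
    simp only [ct] at hxy hlt
    exact hsq ⟨i, j, hx, hconv i j k l _ _ hx hy (by omega) (by omega) (by omega) (by omega),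
      hconv i j k l _ _ hx hy (by omega) (by omega) (by omega) (by omega),
      hconv i j k l _ _ hx hy (by omega) (by omega) (by omega) (by omega)⟩
  have hinj : ∀ x ∈ R, ∀ y ∈ R, ct x = ct y → x = y := by
    intro x hx y hy hxy
    have h1 := hinj' x hx y hy hxy
    have h2 := hinj' y hy x hx hxy.symm
    unfold ct at hxy
    ext <;> omega
  have hne : (R.image ct).Nonempty := by
    rw [Finset.image_nonempty, ← Finset.card_pos]; omega
  set h := (R.image ct).max' hne with hh
  set l := (R.image ct).min' hne with hl
  obtain ⟨b, hb, hbh⟩ := Finset.mem_image.1 ((R.image ct).max'_mem hne)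
  obtain ⟨a, ha, hal⟩ := Finset.mem_image.1 ((R.image ct).min'_mem hne)
  rw [← hh] at hbh
  rw [← hl] at hal
  have hr : ∀ x ∈ R, l ≤ ct x ∧ ct x ≤ h := fun x hx =>
    ⟨Finset.min'_le _ _ (Finset.mem_image_of_mem _ hx),
      Finset.le_max' _ _ (Finset.mem_image_of_mem _ hx)⟩
  have hs : ∀ t, l ≤ t → t ≤ h → ∃ x ∈ R, ct x = t := by
    intro t h1 h2
    rcases h2.eq_or_lt with h2 | h2
    · exact ⟨b, hb, by omega⟩
    · obtain ⟨y, hy, -, -, -, hyt, -⟩ :=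
        exists_crossing ha (hconn a ha b hb) (t := t) (by omega) (by omega)
      exact ⟨y, hy, hyt⟩
  have himg : R.image ct = Finset.Icc l h := by
    ext t
    rw [Finset.mem_image, Finset.mem_Icc]
    constructor
    · rintro ⟨x, hx, rfl⟩; exact hr x hx
    · rintro ⟨h1, h2⟩; exact hs t h1 h2
  have hc : n = (h + 1 - l).toNat := by
    rw [← hcard, ← Int.card_Icc, ← himg]
    exact (Finset.card_image_of_injOn fun x hx y hy => hinj x hx y hy).symm
  have hlh : l ≤ h := by have := hr a ha; omega
  refine ⟨h, hinj, fun x hx => ?_, fun t h1 h2 => hs t (by omega) h2, fun x hx y hy hxy => ?_⟩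
  · have := hr x hx; omega
  · obtain ⟨x', hx', y', hy', hadj, h1, h2⟩ :=
      exists_crossing hx (hconn x hx y hy) (t := ct x) le_rfl (by omega)
    obtain rfl := hinj x' hx' x hx h1
    obtain rfl := hinj y' hy' y hy (by omega)
    unfold ct at hxy
    rcases hadj with ⟨e1, e2 | e2⟩ | ⟨e1, e2 | e2⟩
    · left; ext <;> simp <;> omega
    · omega
    · omega
    · right; ext <;> simp <;> omega

theorem IsRib.mono {n : ℕ} {h : ℤ} {R : Finset Cell} (H : IsRib n h R) {x y : Cell} (hx : x ∈ R)
    (hy : y ∈ R) (hxy : ct x ≤ ct y) : y.1 ≤ x.1 ∧ x.2 ≤ y.2 := by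
  obtain ⟨d, hd⟩ := Int.le.dest hxy
  induction d generalizing y with
  | zero =>
    obtain rfl := H.inj x hx y hy (by simpa using hd)
    exact ⟨le_rfl, le_rfl⟩
  | succ d ih =>
    have h1 := H.range x hx
    have h2 := H.range y hy
    obtain ⟨z, hz, hzt⟩ := H.surj (ct y - 1) (by omega) (by omega)
    have := ih hz (by omega) (by omega)
    rcases H.adj z hz y hy (by omega) with e | e
    · rw [e]; simp; omega
    · rw [e] at this; simp at this; omega

theorem IsRib.topRightCell_iff {n : ℕ} {h : ℤ} {R : Finset Cell} (H : IsRib n h R)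
    (hn : 1 ≤ n) (c : Cell) : TopRightCell R c ↔ c ∈ R ∧ ct c = h := by
  constructor
  · rintro ⟨hc, hd⟩
    refine ⟨hc, ?_⟩
    obtain ⟨y, hy, hyt⟩ := H.surj h (by omega) le_rfl
    have h1 := H.range c hc
    have h2 := H.mono hc hy (by omega)
    have h3 := hd y hy
    have : c.2 = y.2 := by omega
    have := h3.2 this.symm
    unfold ct at *
    omega
  · rintro ⟨hc, hch⟩
    refine ⟨hc, fun d hd => ?_⟩
    have h1 := H.range d hd
    have h2 := H.mono hd hc (by omega)
    exact ⟨h2.2, fun _ => h2.1⟩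

/-! ### Ribbon removal and the diagonal profile -/

/-- `γ` arises from `β` by removing an `n`-ribbon of largest content `h`, expressed through
the diagonal profiles. -/
def Step (n : ℕ) (h : ℤ) (γ β : YoungDiagram) : Prop :=
  ∀ t, rho β t = rho γ t + if h - n < t ∧ t ≤ h then 1 else 0

theorem Step.unique {n : ℕ} {h : ℤ} {γ γ' β : YoungDiagram} (H : Step n h γ β)
    (H' : Step n h γ' β) : γ = γ' :=
  rho_ext fun t => by have := H t; have := H' t; omega

theorem Step.le {n : ℕ} {h : ℤ} {γ β : YoungDiagram} (H : Step n h γ β) : γ ≤ β :=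
  le_iff_rho.2 fun t => by have := H t; omega

theorem mem_sdiff_iff {β γ : YoungDiagram} {c : Cell} :
    c ∈ β.cells \ γ.cells ↔ rho γ (ct c) ≤ c.1 ∧ c.1 < rho β (ct c) := by
  rcases c with ⟨i, j⟩
  rw [Finset.mem_sdiff, YoungDiagram.mem_cells, YoungDiagram.mem_cells, mem_iff_rho, mem_iff_rho,
    and_comm, not_lt]
  rfl

/-- A cell of given row and content. -/
theorem exists_cell {r : ℕ} {t : ℤ} (h : -t ≤ r) : ∃ c : Cell, c.1 = r ∧ ct c = t :=
  ⟨(r, (r + t).toNat), rfl, by simp only [ct]; omega⟩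

theorem cell_ext {c d : Cell} (h1 : c.1 = d.1) (h2 : ct c = ct d) : c = d := by
  unfold ct at h2; ext <;> omega

theorem IsRib.step {n : ℕ} {h : ℤ} {γ β : YoungDiagram} (hle : γ ≤ β)
    (H : IsRib n h (β.cells \ γ.cells)) : Step n h γ β := by
  intro t
  have h0 := le_iff_rho.1 hle t
  have hg := rho_ge γ t
  split_ifs with ht
  · obtain ⟨c, hc, rfl⟩ := H.surj t ht.1 ht.2
    have hc' := mem_sdiff_iff.1 hc
    by_contra hne
    obtain ⟨d, hd1, hd2⟩ := exists_cell (r := rho γ (ct c)) hg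
    obtain ⟨e, he1, he2⟩ := exists_cell (r := rho γ (ct c) + 1) (t := ct c) (by push_cast; omega)
    have hd : d ∈ β.cells \ γ.cells := by rw [mem_sdiff_iff, hd2, hd1]; omega
    have he : e ∈ β.cells \ γ.cells := by rw [mem_sdiff_iff, he2, he1]; omega
    have := H.inj d hd e he (by omega)
    rw [this] at hd1
    omega
  · by_contra hne
    obtain ⟨d, hd1, hd2⟩ := exists_cell (r := rho γ t) hg
    have hd : d ∈ β.cells \ γ.cells := by rw [mem_sdiff_iff, hd2, hd1]; omega
    have := H.range d hd
    rw [hd2] at this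
    exact ht this

theorem Step.mem_iff {n : ℕ} {h : ℤ} {γ β : YoungDiagram} (H : Step n h γ β) {c : Cell} :
    c ∈ β.cells \ γ.cells ↔ (h - n < ct c ∧ ct c ≤ h) ∧ c.1 + 1 = rho β (ct c) := by
  have := H (ct c)
  rw [mem_sdiff_iff]
  split_ifs at this with hc
  · simp only [hc, and_self, true_and]; omega
  · simp only [hc, false_and, iff_false]; omega

theorem Step.isRib {n : ℕ} {h : ℤ} {γ β : YoungDiagram} (H : Step n h γ β) :
    IsRib n h (β.cells \ γ.cells) := by
  refine ⟨fun x hx y hy hxy => ?_, fun x hx => (H.mem_iff.1 hx).1, fun t h1 h2 => ?_,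
    fun x hx y hy hxy => ?_⟩
  · rw [H.mem_iff] at hx hy
    refine cell_ext ?_ hxy
    rw [hxy] at hx; omega
  · have := H t
    rw [if_pos ⟨h1, h2⟩] at this
    have := rho_ge γ t
    obtain ⟨c, hc1, hc2⟩ := exists_cell (r := rho γ t) (t := t) (by omega)
    refine ⟨c, ?_, hc2⟩
    rw [H.mem_iff, hc2]; exact ⟨⟨h1, h2⟩, by omega⟩
  · rw [H.mem_iff] at hx hy
    have h1 := rho_succ_le β (ct x)
    have h2 := rho_le_succ β (ct x)
    rw [← hxy] at h1 h2
    unfold ct at *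
    by_cases hr : x.1 = y.1
    · left; ext <;> simp <;> omega
    · right; ext <;> simp <;> omega

theorem Step.isRibbon {n : ℕ} {h : ℤ} {γ β : YoungDiagram} (H : Step n h γ β) :
    IsRibbon n (β.cells \ γ.cells) := by
  have HR := H.isRib
  refine ⟨?_, ?_, ?_, β, γ, H.le, rfl⟩
  · rw [← Finset.card_image_of_injOn (f := ct) fun x hx y hy => HR.inj x hx y hy]
    have : (β.cells \ γ.cells).image ct = Finset.Ioc (h - n) h := by
      ext t
      rw [Finset.mem_image, Finset.mem_Ioc]
      constructor
      · rintro ⟨x, hx, rfl⟩; exact HR.range x hx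
      · rintro ⟨h1, h2⟩; exact HR.surj t h1 h2
    rw [this, Int.card_Ioc]; omega
  · have key : ∀ d : ℕ, ∀ a ∈ β.cells \ γ.cells, ∀ b ∈ β.cells \ γ.cells, ct a + d = ct b →
        Reach (β.cells \ γ.cells) a b ∧ Reach (β.cells \ γ.cells) b a := by
      intro d
      induction d with
      | zero =>
        intro a ha b hb hab
        obtain rfl := HR.inj a ha b hb (by simpa using hab)
        exact ⟨.refl, .refl⟩
      | succ d ih =>
        intro a ha b hb hab
        have h1 := HR.range a ha
        have h2 := HR.range b hb
        obtain ⟨z, hz, hzt⟩ := HR.surj (ct b - 1) (by omega) (by omega)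
        obtain ⟨i1, i2⟩ := ih a ha z hz (by omega)
        have hzb : Adj z b ∧ Adj b z := by
          rcases HR.adj z hz b hb (by omega) with e | e
          · rw [e]; simp [Adj]
          · rw [e]; simp [Adj]
        exact ⟨i1.tail ⟨hb, hzb.1⟩, Relation.ReflTransGen.head ⟨hz, hzb.2⟩ i2⟩
    intro a ha b hb
    rcases le_total (ct a) (ct b) with hle | hle
    · exact (key (ct b - ct a).toNat a ha b hb (by omega)).1
    · exact (key (ct a - ct b).toNat b hb a ha (by omega)).2
  · rintro ⟨i, j, h1, -, -, h4⟩
    have := HR.inj _ h1 _ h4 (by simp [ct])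
    simp at this

theorem Step.spin {n : ℕ} (hn : 1 ≤ n) {h : ℤ} {γ β : YoungDiagram} (H : Step n h γ β) :
    ribbonSpin (β.cells \ γ.cells) = rho β (h - n + 1) - rho β h := by
  have hanti : Antitone (rho β) := antitone_int_of_succ_le (rho_succ_le β)
  have hpos : ∀ t, h - n < t → t ≤ h → 1 ≤ rho β t := fun t h1 h2 => by
    have := H t; rw [if_pos ⟨h1, h2⟩] at this; omega
  have : (β.cells \ γ.cells).image Prod.fst =
      Finset.Icc (rho β h - 1) (rho β (h - n + 1) - 1) := by
    ext r
    rw [Finset.mem_image, Finset.mem_Icc]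
    constructor
    · rintro ⟨c, hc, rfl⟩
      rw [H.mem_iff] at hc
      have h1 : rho β h ≤ rho β (ct c) := hanti hc.1.2
      have h2 : rho β (ct c) ≤ rho β (h - n + 1) := hanti (by omega)
      omega
    · rintro ⟨h1, h2⟩
      -- every intermediate row is attained because `rho β` drops by at most one per step
      have key : ∀ d : ℕ, d < n → rho β (h - d) ≤ r + 1 ∨
          ∃ t, h - n < t ∧ t ≤ h ∧ rho β t = r + 1 := by
        intro d
        induction d with
        | zero => intro _; left; simp; omega
        | succ d ih =>
          intro hd
          rcases ih (by omega) with h3 | h3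
          · by_cases he : rho β (h - d) = r + 1
            · exact Or.inr ⟨h - d, by omega, by omega, he⟩
            · left
              have := rho_le_succ β (h - (d + 1 : ℕ))
              rw [show h - ((d + 1 : ℕ) : ℤ) + 1 = h - d by push_cast; ring] at this
              omega
          · exact Or.inr h3
      have : ∃ t, h - n < t ∧ t ≤ h ∧ rho β t = r + 1 := by
        rcases key (n - 1) (by omega) with h3 | h3
        · have hp := hpos (h - n + 1) (by omega) (by omega)
          rw [show h - ((n - 1 : ℕ) : ℤ) = h - n + 1 by omega] at h3
          exact ⟨h - n + 1, by omega, by omega, by omega⟩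
        · exact h3
      obtain ⟨t, ht1, ht2, ht3⟩ := this
      have hg := rho_ge γ t
      have hH := H t
      rw [if_pos ⟨ht1, ht2⟩] at hH
      obtain ⟨c, hc1, hc2⟩ := exists_cell (r := r) (t := t) (by omega)
      exact ⟨c, H.mem_iff.2 ⟨by omega, by rw [hc2]; omega⟩, hc1⟩
  rw [ribbonSpin, this, Nat.card_Icc]
  have h1 := hpos h (by omega) le_rfl
  have h2 : rho β h ≤ rho β (h - n + 1) := hanti (by omega)
  omega

theorem Step.occ_top {n : ℕ} (hn : 1 ≤ n) {h : ℤ} {γ β : YoungDiagram} (H : Step n h γ β) :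
    occ β (h + 1) ∧ ¬ occ γ (h + 1) ∧ ¬ occ β (h + 1 - n) ∧ occ γ (h + 1 - n) := by
  have a1 := H h
  have a2 := H (h + 1)
  have a3 := H (h + 1 - n)
  have a4 := H (h + 1 - n - 1)
  rw [if_pos (by omega)] at a1 a3
  rw [if_neg (by omega)] at a2 a4
  have b1 := rho_succ_le γ h
  have b2 := rho_le_succ β h
  have b3 := rho_succ_le β (h + 1 - n - 1)
  have b4 := rho_le_succ γ (h + 1 - n - 1)
  rw [sub_add_cancel] at b3 b4
  rw [not_occ, not_occ, occ, occ, add_sub_cancel_right]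
  omega

theorem Step.occ_iff {n : ℕ} {h : ℤ} {γ β : YoungDiagram} (H : Step n h γ β) {p : ℤ}
    (h1 : p ≠ h + 1) (h2 : p ≠ h + 1 - n) : occ γ p ↔ occ β p := by
  have a1 := H p
  have a2 := H (p - 1)
  rw [occ, occ]
  by_cases hp : h - n < p ∧ p ≤ h
  · rw [if_pos hp] at a1; rw [if_pos (by omega)] at a2; omega
  · rw [if_neg hp] at a1; rw [if_neg (by omega)] at a2; omega

theorem exists_step {n : ℕ} (hn : 1 ≤ n) {h : ℤ} {β : YoungDiagram} (h1 : occ β (h + 1))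
    (h2 : ¬ occ β (h + 1 - n)) : ∃ γ, Step n h γ β := by
  have hanti : Antitone (rho β) := antitone_int_of_succ_le (rho_succ_le β)
  -- `rho β t + t` is the column in which the diagonal leaves the diagram
  have hmono : Monotone (fun t => (rho β t : ℤ) + t) := monotone_int_of_le_succ fun t => by
    have := rho_le_succ β t; omega
  rw [occ, add_sub_cancel_right] at h1
  rw [not_occ] at h2
  have hpos : ∀ t, h - n < t → t ≤ h → 1 ≤ rho β t ∧ -t ≤ (rho β t : ℤ) - 1 := by
    intro t ht1 ht2
    have e1 : rho β h ≤ rho β t := hanti ht2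
    have e2 : (rho β (h + 1 - n) : ℤ) + (h + 1 - n) ≤ rho β t + t := hmono (by omega)
    have e3 := rho_ge β (h + 1 - n - 1)
    omega
  obtain ⟨γ, hγ⟩ := exists_rho_eq β
    (fun t => rho β t - if h - n < t ∧ t ≤ h then 1 else 0)
    (fun t => by
      have b1 := rho_succ_le β t
      by_cases c2 : t = h
      · rw [if_neg (by omega), if_pos (by omega), c2]; omega
      · by_cases c1 : h - n < t ∧ t ≤ h
        · rw [if_pos (by omega), if_pos c1]; omega
        · rw [if_neg c1]; omega)
    (fun t => by
      have b1 := rho_le_succ β t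
      by_cases c2 : t + 1 = h + 1 - n
      · rw [if_neg (by omega), if_pos (by omega), c2, show t = h + 1 - n - 1 by omega]; omega
      · by_cases c1 : h - n < t + 1 ∧ t + 1 ≤ h
        · rw [if_pos (by omega), if_pos c1]
          have := hpos (t + 1) c1.1 c1.2; omega
        · rw [if_neg c1]; omega)
    (fun t => by
      have := rho_ge β t
      split_ifs with c1
      · have := hpos t c1.1 c1.2; omega
      · omega)
    (fun t => by omega)
  refine ⟨γ, fun t => ?_⟩
  rw [hγ]
  split_ifs with ht
  · have := hpos t ht.1 ht.2; omega
  · omega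

end SuperRibbon

namespace SuperRibbon

/-! ### Horizontal strips are built by adding ribbons in increasing order of content -/

/-- The horizontal ribbon strip tilings of `β / α` all of whose contents are at most `k`. -/
noncomputable def Tl (n : ℕ) (k : ℤ) (α β : YoungDiagram) : Finset (Finset (Finset Cell)) :=
  (β.cells \ α.cells).powerset.powerset.filter fun T =>
    α ≤ β ∧ IsHStripTiling n (β.cells \ α.cells) T ∧ ∀ R ∈ T, ∀ c ∈ R, ct c ≤ k

theorem mem_Tl {n : ℕ} {k : ℤ} {α β : YoungDiagram} {T : Finset (Finset Cell)} :
    T ∈ Tl n k α β ↔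
      α ≤ β ∧ IsHStripTiling n (β.cells \ α.cells) T ∧ ∀ R ∈ T, ∀ c ∈ R, ct c ≤ k := by
  rw [Tl, Finset.mem_filter, and_iff_right_iff_imp]
  rintro ⟨-, h, -⟩
  rw [Finset.mem_powerset]
  intro R hR
  rw [Finset.mem_powerset, ← h.1.2.2]
  exact Finset.subset_biUnion_of_mem id hR

/-- The ribbon `R'` of a horizontal strip has no cell of the strip north-west of its head,
strictly above it. -/
theorem north_aux {n : ℕ} (hn : 1 ≤ n) {α β : YoungDiagram} {T : Finset (Finset Cell)}
    (hT : IsHStripTiling n (β.cells \ α.cells) T) {R' : Finset Cell} (hR' : R' ∈ T) {h' : ℤ}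
    (H' : IsRib n h' R') {x z : Cell} (hx : x ∈ β.cells \ α.cells) (hz : z ∈ R')
    (hzh : ct z = h') (h1 : x.1 < z.1) (h2 : x.2 ≤ z.2) : False := by
  have hzS : z ∈ β.cells \ α.cells := by
    rw [← hT.1.2.2]; exact Finset.mem_biUnion.2 ⟨R', hR', hz⟩
  rw [Finset.mem_sdiff, YoungDiagram.mem_cells, YoungDiagram.mem_cells] at hx hzS
  rcases hT.2 R' hR' z ((H'.topRightCell_iff hn z).2 ⟨hz, hzh⟩) with h | h
  · omega
  · apply h
    rw [Finset.mem_sdiff, YoungDiagram.mem_cells, YoungDiagram.mem_cells]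
    exact ⟨β.up_left_mem (Nat.sub_le _ _) le_rfl hzS.1,
      fun ha => hx.2 (α.up_left_mem (by omega) h2 ha)⟩

/-- No ribbon of a horizontal strip has a cell south-east of a cell of a different ribbon
reaching at least as large contents. -/
theorem ribbon_order {n : ℕ} (hn : 1 ≤ n) {α β : YoungDiagram} {T : Finset (Finset Cell)}
    (hT : IsHStripTiling n (β.cells \ α.cells) T) {R R' : Finset Cell} (hR : R ∈ T)
    (hR' : R' ∈ T) (hne : R ≠ R') {h h' : ℤ} (H : IsRib n h R) (H' : IsRib n h' R')
    (hh : h' ≤ h) {x y : Cell} (hx : x ∈ R) (hy : y ∈ R') (h1 : x.1 ≤ y.1) (h2 : x.2 ≤ y.2) :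
    False := by
  have hdisj : ∀ z ∈ R, ∀ z' ∈ R', z ≠ z' := fun z hz z' hz' e =>
    Finset.disjoint_left.1 (hT.1.2.1 hR hR' hne) hz (e ▸ hz')
  have hS : ∀ z ∈ R, z ∈ β.cells \ α.cells := fun z hz => by
    rw [← hT.1.2.2]; exact Finset.mem_biUnion.2 ⟨R, hR, hz⟩
  obtain ⟨w, hw, hwt⟩ := H'.surj h' (by omega) le_rfl
  have hyr := H'.range y hy
  have hxr := H.range x hx
  by_cases hlt : h' < ct x
  · have := H'.mono hy hw (by omega)
    refine north_aux hn hT hR' H' (hS x hx) hw hwt ?_ (by omega)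
    unfold ct at *
    omega
  have start : ∃ z ∈ R, ∃ z' ∈ R', ct z = ct z' ∧ z.1 < z'.1 := by
    rcases le_total (ct x) (ct y) with hle | hle
    · obtain ⟨x', hx', e⟩ := H.surj (ct y) (by omega) (by omega)
      have hm := H.mono hx hx' (by omega)
      refine ⟨x', hx', y, hy, e, lt_of_le_of_ne (by omega) fun e' => ?_⟩
      exact hdisj x' hx' y hy (cell_ext e' e)
    · obtain ⟨y', hy', e⟩ := H'.surj (ct x) (by omega) (by omega)
      have hm := H'.mono hy hy' (by omega)
      refine ⟨x, hx, y', hy', e.symm, lt_of_le_of_ne ?_ fun e' => ?_⟩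
      · unfold ct at *; omega
      · exact hdisj x hx y' hy' (cell_ext e' e.symm)
  obtain ⟨z, hz, z', hz', e, hlt'⟩ := start
  have key : ∀ d : ℕ, ct z + d ≤ h' → ∃ u ∈ R, ∃ u' ∈ R', ct u = ct z + d ∧ ct u' = ct z + d ∧
      u.1 < u'.1 := by
    intro d
    induction d with
    | zero => intro _; exact ⟨z, hz, z', hz', by simp, by simp [e], hlt'⟩
    | succ d ih =>
      intro hd
      obtain ⟨u, hu, u', hu', e1, e2, e3⟩ := ih (by push_cast at hd; omega)
      have r1 := H.range u hu
      have r2 := H'.range u' hu'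
      obtain ⟨v, hv, ev⟩ := H.surj (ct u + 1) (by omega) (by push_cast at hd; omega)
      obtain ⟨v', hv', ev'⟩ := H'.surj (ct u + 1) (by omega) (by push_cast at hd; omega)
      refine ⟨v, hv, v', hv', by push_cast; omega, by push_cast; omega, ?_⟩
      have hvv : v.1 ≠ v'.1 := fun e => hdisj v hv v' hv' (cell_ext e (by omega))
      have a1 := H.mono hu hv (by omega)
      rcases H'.adj u' hu' v' hv' (by omega) with a2 | a2
      · rw [a2]; simp only; omega
      · rw [a2] at e3; simp only at e3; omega
  obtain ⟨r1, r2⟩ := H'.range z' hz'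
  obtain ⟨u, hu, u', hu', e1, e2, e3⟩ := key (h' - ct z).toNat (by omega)
  refine north_aux hn hT hR' H' (hS u hu) hu' (by omega) e3 ?_
  unfold ct at *
  omega

/-- Removing the ribbon of largest content from a horizontal strip. -/
theorem erase_mem_Tl {n : ℕ} (hn : 1 ≤ n) {k : ℤ} {α β : YoungDiagram}
    {T : Finset (Finset Cell)} (hT : T ∈ Tl n k α β) (hT' : T ∉ Tl n (k - 1) α β) :
    ∃ γ, Step n k γ β ∧ β.cells \ γ.cells ∈ T ∧ T.erase (β.cells \ γ.cells) ∈ Tl n (k - 1) α γ := by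
  rw [mem_Tl] at hT
  obtain ⟨hle, hH, hk⟩ := hT
  have hex : ∃ R ∈ T, ∃ c ∈ R, ct c = k := by
    by_contra hc
    push Not at hc
    refine hT' (mem_Tl.2 ⟨hle, hH, fun R hR c hcR => ?_⟩)
    have := hk R hR c hcR
    have := hc R hR c hcR
    omega
  obtain ⟨R, hR, c, hc, hck⟩ := hex
  have hhead : ∀ R ∈ T, ∃ h, h ≤ k ∧ IsRib n h R := fun R hR => by
    obtain ⟨h, H⟩ := IsRibbon.exists_isRib hn (hH.1.1 R hR)
    obtain ⟨w, hw, hwt⟩ := H.surj h (by omega) le_rfl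
    exact ⟨h, by have := hk R hR w hw; omega, H⟩
  obtain ⟨h, hhk, H⟩ := hhead R hR
  obtain rfl : h = k := by have := H.range c hc; omega
  have hRS : R ⊆ β.cells \ α.cells := by
    rw [← hH.1.2.2]; exact Finset.subset_biUnion_of_mem id hR
  let γ : YoungDiagram :=
    { cells := β.cells \ R
      isLowerSet := by
        rintro ⟨i, j⟩ ⟨i', j'⟩ hle' hc'
        obtain ⟨hi, hj⟩ : i' ≤ i ∧ j' ≤ j := hle'
        simp only [Finset.coe_sdiff, Set.mem_sdiff, Finset.mem_coe, YoungDiagram.mem_cells] at hc' ⊢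
        refine ⟨β.up_left_mem hi hj hc'.1, fun hx => ?_⟩
        have hyS : (i, j) ∈ T.biUnion id := by
          rw [hH.1.2.2, Finset.mem_sdiff]
          refine ⟨hc'.1, fun ha => ?_⟩
          exact (Finset.mem_sdiff.1 (hRS hx)).2 (α.up_left_mem hi hj ha)
        obtain ⟨R', hR', hy⟩ := Finset.mem_biUnion.1 hyS
        obtain ⟨h', hh', H'⟩ := hhead R' hR'
        refine ribbon_order hn hH hR hR' ?_ H H' hh' hx hy hi hj
        rintro rfl
        exact hc'.2 hy }
  have hγ : γ.cells = β.cells \ R := rfl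
  have hRβ : R ⊆ β.cells := fun c hc => (Finset.mem_sdiff.1 (hRS hc)).1
  have hsd : β.cells \ γ.cells = R := by
    rw [hγ, Finset.sdiff_sdiff_eq_self hRβ]
  have hγβ : γ ≤ β := fun c hc => (Finset.mem_sdiff.1 (show c ∈ β.cells \ R from hc)).1
  have hαγ : α ≤ γ := fun c hc => by
    show c ∈ β.cells \ R
    rw [Finset.mem_sdiff]
    exact ⟨hle hc, fun h => (Finset.mem_sdiff.1 (hRS h)).2 hc⟩
  refine ⟨γ, IsRib.step hγβ (by rw [hsd]; exact H), by rw [hsd]; exact hR, ?_⟩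
  rw [hsd, mem_Tl]
  have hsub : γ.cells \ α.cells ⊆ β.cells \ α.cells :=
    Finset.sdiff_subset_sdiff (fun c hc => hγβ hc) le_rfl
  refine ⟨hαγ, ⟨⟨fun R' hR' => hH.1.1 R' (Finset.mem_of_mem_erase hR'), ?_, ?_⟩, ?_⟩, ?_⟩
  · exact hH.1.2.1.mono (by simp)
  · ext c
    have hc1 : c ∈ T.biUnion id ↔ c ∈ β.cells \ α.cells := by rw [hH.1.2.2]
    rw [Finset.mem_sdiff] at hc1
    rw [Finset.mem_sdiff, hγ, Finset.mem_sdiff, and_right_comm, ← hc1, Finset.mem_biUnion,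
      Finset.mem_biUnion]
    constructor
    · rintro ⟨R', hR', hcR⟩
      rw [Finset.mem_erase] at hR'
      exact ⟨⟨R', hR'.2, hcR⟩, fun hcR' =>
        Finset.disjoint_left.1 (hH.1.2.1 hR'.2 hR hR'.1) hcR hcR'⟩
    · rintro ⟨⟨R', hR', hcR⟩, hn'⟩
      exact ⟨R', Finset.mem_erase.2 ⟨by rintro rfl; exact hn' hcR, hR'⟩, hcR⟩
  · intro R' hR' c hc
    rcases hH.2 R' (Finset.mem_of_mem_erase hR') c hc with h' | h'
    · exact Or.inl h'
    · exact Or.inr fun h'' => h' (hsub h'')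
  · intro R' hR' d hd
    rw [Finset.mem_erase] at hR'
    by_contra hlt
    have hdk : ct d = h := by have := hk R' hR'.2 d hd; omega
    have hdc : d.1 ≠ c.1 := fun e =>
      Finset.disjoint_left.1 (hH.1.2.1 hR'.2 hR hR'.1) hd (cell_ext e (by omega) ▸ hc)
    obtain ⟨h', hh', H'⟩ := hhead R' hR'.2
    have hr := H'.range d hd
    have hS : ∀ R ∈ T, ∀ z ∈ R, z ∈ β.cells \ α.cells := fun R hR z hz => by
      rw [← hH.1.2.2]; exact Finset.mem_biUnion.2 ⟨R, hR, hz⟩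
    rcases lt_or_gt_of_ne hdc with h1 | h1
    · refine north_aux hn hH hR H (hS R' hR'.2 d hd) hc hck h1 ?_
      unfold ct at *; omega
    · refine north_aux hn hH hR'.2 H' (hS R hR c hc) hd (by omega) h1 ?_
      unfold ct at *; omega

/-- Adding a ribbon of larger content to a horizontal strip. -/
theorem insert_mem_Tl {n : ℕ} (hn : 1 ≤ n) {k : ℤ} {α γ β : YoungDiagram} (hS : Step n k γ β)
    {T : Finset (Finset Cell)} (hT : T ∈ Tl n (k - 1) α γ) :
    β.cells \ γ.cells ∉ T ∧ insert (β.cells \ γ.cells) T ∈ Tl n k α β ∧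
      insert (β.cells \ γ.cells) T ∉ Tl n (k - 1) α β := by
  obtain ⟨hle, hH, hk⟩ := mem_Tl.1 hT
  have HR := hS.isRib
  obtain ⟨w, hw, hwk⟩ := HR.surj k (by omega) le_rfl
  have hTγ : ∀ R ∈ T, R ⊆ γ.cells \ α.cells := fun R hR => by
    rw [← hH.1.2.2]; exact Finset.subset_biUnion_of_mem id hR
  have hdis : ∀ R ∈ T, Disjoint (β.cells \ γ.cells) R := fun R hR =>
    Finset.disjoint_left.2 fun c hc hcR =>
      (Finset.mem_sdiff.1 hc).2 (Finset.mem_sdiff.1 (hTγ R hR hcR)).1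
  refine ⟨fun h => by have := hk _ h w hw; omega, mem_Tl.2 ⟨hle.trans hS.le, ⟨⟨?_, ?_, ?_⟩, ?_⟩, ?_⟩,
    fun h => by have := (mem_Tl.1 h).2.2 _ (Finset.mem_insert_self _ _) w hw; omega⟩
  · intro R hR
    rcases Finset.mem_insert.1 hR with rfl | hR
    · exact hS.isRibbon
    · exact hH.1.1 R hR
  · intro A hA B hB hne
    rcases Finset.mem_insert.1 (Finset.mem_coe.1 hA) with rfl | hA <;>
      rcases Finset.mem_insert.1 (Finset.mem_coe.1 hB) with rfl | hB
    · exact absurd rfl hne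
    · exact hdis B hB
    · exact (hdis A hA).symm
    · exact hH.1.2.1 hA hB hne
  · rw [Finset.biUnion_insert, hH.1.2.2, id]
    ext c
    simp only [Finset.mem_union, Finset.mem_sdiff, YoungDiagram.mem_cells]
    have h1 : c ∈ α → c ∈ γ := fun h => hle h
    have h2 : c ∈ γ → c ∈ β := fun h => hS.le h
    tauto
  · intro R hR c hc
    by_cases h0 : c.1 = 0
    · exact Or.inl h0
    refine Or.inr fun hmem => ?_
    have hctu : ct (c.1 - 1, c.2) = ct c + 1 := by simp only [ct]; omega
    have hsplit : (c.1 - 1, c.2) ∈ β.cells \ γ.cells ∨ (c.1 - 1, c.2) ∈ γ.cells \ α.cells := by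
      simp only [Finset.mem_sdiff, YoungDiagram.mem_cells] at hmem ⊢
      tauto
    rcases Finset.mem_insert.1 hR with rfl | hR
    · have hck := ((HR.topRightCell_iff hn c).1 hc).2
      rcases hsplit with h | h
      · have := HR.range _ h; omega
      · rw [← hH.1.2.2] at h
        obtain ⟨R', hR', hcR'⟩ := Finset.mem_biUnion.1 h
        have := hk R' hR' _ hcR'
        omega
    · rcases hsplit with h | h
      · have := Finset.mem_sdiff.1 (hTγ R hR hc.1)
        exact (Finset.mem_sdiff.1 h).2 (γ.up_left_mem (Nat.sub_le _ _) le_rfl this.1)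
      · rcases hH.2 R hR c hc with h' | h'
        · exact h0 h'
        · exact h' h
  · intro R hR c hc
    rcases Finset.mem_insert.1 hR with rfl | hR
    · exact (HR.range c hc).2
    · have := hk R hR c hc; omega

/-- Generating function of the horizontal ribbon strip tilings of `β / α` with contents at
most `k`, each ribbon `R` being weighted by `w R`. -/
noncomputable def Gk {K : Type*} [CommRing K] (w : Finset Cell → K) (n : ℕ) (k : ℤ)
    (α β : YoungDiagram) : K :=
  ∑ T ∈ Tl n k α β, ∏ R ∈ T, w R

theorem Tl_mono {n : ℕ} {k k' : ℤ} (h : k ≤ k') (α β : YoungDiagram) :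
    Tl n k α β ⊆ Tl n k' α β := fun T hT => by
  rw [mem_Tl] at *
  exact ⟨hT.1, hT.2.1, fun R hR c hc => (hT.2.2 R hR c hc).trans h⟩

theorem Gk_of_step {K : Type*} [CommRing K] (w : Finset Cell → K) {n : ℕ} (hn : 1 ≤ n) {k : ℤ}
    (α : YoungDiagram) {γ β : YoungDiagram} (hS : Step n k γ β) :
    Gk w n k α β = Gk w n (k - 1) α β + Gk w n (k - 1) α γ * w (β.cells \ γ.cells) := by
  rw [Gk, ← Finset.sum_sdiff (Tl_mono (show k - 1 ≤ k by omega) α β), add_comm]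
  congr 1
  rw [Gk, Finset.sum_mul]
  symm
  refine Finset.sum_bij (fun T _ => insert (β.cells \ γ.cells) T) ?_ ?_ ?_ ?_
  · intro T hT
    exact Finset.mem_sdiff.2 (insert_mem_Tl hn hS hT).2
  · intro T hT T' hT' h
    rw [← Finset.erase_insert (insert_mem_Tl hn hS hT).1, h,
      Finset.erase_insert (insert_mem_Tl hn hS hT').1]
  · intro T hT
    rw [Finset.mem_sdiff] at hT
    obtain ⟨γ', hS', h1, h2⟩ := erase_mem_Tl hn hT.1 hT.2
    obtain rfl := hS.unique hS'
    exact ⟨_, h2, Finset.insert_erase h1⟩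
  · intro T hT
    rw [Finset.prod_insert (insert_mem_Tl hn hS hT).1, mul_comm]

theorem Gk_of_not_step {K : Type*} [CommRing K] (w : Finset Cell → K) {n : ℕ} (hn : 1 ≤ n)
    {k : ℤ} (α : YoungDiagram) {β : YoungDiagram} (hS : ¬ ∃ γ, Step n k γ β) :
    Gk w n k α β = Gk w n (k - 1) α β := by
  rw [Gk, Gk]
  refine Finset.sum_congr (Finset.Subset.antisymm ?_ (Tl_mono (by omega) α β)) fun _ _ => rfl
  intro T hT
  by_contra h
  obtain ⟨γ, h', -⟩ := erase_mem_Tl hn hT h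
  exact hS ⟨γ, h'⟩

theorem Gk_low {K : Type*} [CommRing K] (w : Finset Cell → K) {n : ℕ} (hn : 1 ≤ n)
    {k : ℤ} {α β lam : YoungDiagram} (hβ : β ≤ lam) (hk : k ≤ -(bd lam : ℤ)) :
    Gk w n k α β = if α = β then 1 else 0 := by
  have hemp : ∀ T ∈ Tl n k α β, T = ∅ := by
    intro T hT
    rw [mem_Tl] at hT
    rw [Finset.eq_empty_iff_forall_notMem]
    intro R hR
    have hne : R.Nonempty := by
      rw [← Finset.card_pos, (hT.2.1.1.1 R hR).1]; omega
    obtain ⟨c, hc⟩ := hne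
    have h1 : c ∈ β.cells \ α.cells := by
      rw [← hT.2.1.1.2.2]; exact Finset.mem_biUnion.2 ⟨R, hR, hc⟩
    have h2 := hT.2.2 R hR c hc
    have h3 := content_lt_bd hβ (i := c.1) (j := c.2) (Finset.mem_sdiff.1 h1).1
    unfold ct at h2
    omega
  split_ifs with h
  · subst h
    have : Tl n k α α = {∅} := by
      refine Finset.Subset.antisymm (fun T hT => by simp [hemp T hT]) ?_
      rw [Finset.singleton_subset_iff, mem_Tl]
      refine ⟨le_rfl, ⟨⟨by simp, by simp, by simp⟩, fun R hR => by simp at hR⟩, by simp⟩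
    rw [Gk, this]; simp
  · have : Tl n k α β = ∅ := by
      rw [Finset.eq_empty_iff_forall_notMem]
      intro T hT
      have h1 := hemp T hT
      rw [mem_Tl] at hT
      have h2 := hT.2.1.1.2.2
      rw [h1, Finset.biUnion_empty, eq_comm, Finset.sdiff_eq_empty_iff_subset] at h2
      exact h (le_antisymm hT.1 fun c hc => h2 hc)
    rw [Gk, this]; simp

theorem Gk_high {K : Type*} [CommRing K] (w : Finset Cell → K) {n : ℕ}
    {k : ℤ} {α β lam : YoungDiagram} (hβ : β ≤ lam) (hk : (bd lam : ℤ) - 1 ≤ k) :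
    Gk w n k α β = ∑ T ∈ (β.cells \ α.cells).powerset.powerset.filter (fun T =>
      α ≤ β ∧ IsHStripTiling n (β.cells \ α.cells) T), ∏ R ∈ T, w R := by
  rw [Gk]
  refine Finset.sum_congr ?_ fun _ _ => rfl
  rw [Tl]
  refine Finset.filter_congr fun T _ => ?_
  constructor
  · rintro ⟨h1, h2, -⟩; exact ⟨h1, h2⟩
  · rintro ⟨h1, h2⟩
    refine ⟨h1, h2, fun R hR c hc => ?_⟩
    have h3 : c ∈ β.cells \ α.cells := by
      rw [← h2.1.2.2]; exact Finset.mem_biUnion.2 ⟨R, hR, hc⟩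
    have h4 := content_lt_bd hβ (i := c.1) (j := c.2) (Finset.mem_sdiff.1 h3).1
    unfold ct
    omega

end SuperRibbon

namespace SuperRibbon

/-! ### Horizontal strips as bead jumps, and their commutation -/

/-- The occupation list of `β` at the positions `ℓ - C, …, 1 - C`, in decreasing order. -/
noncomputable def ol (C : ℕ) (β : YoungDiagram) : ℕ → List Bool
  | 0 => []
  | ℓ + 1 => decide (occ β ((ℓ : ℤ) + 1 - C)) :: ol C β ℓ

@[simp] theorem ol_length (C : ℕ) (β : YoungDiagram) (ℓ : ℕ) : (ol C β ℓ).length = ℓ := by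
  induction ℓ with
  | zero => rfl
  | succ ℓ ih => simp [ol, ih]

theorem ol_getElem? (C : ℕ) (β : YoungDiagram) (ℓ i : ℕ) :
    (ol C β ℓ)[i]? = if i < ℓ then some (decide (occ β ((ℓ : ℤ) - i - C))) else none := by
  induction ℓ generalizing i with
  | zero => simp [ol]
  | succ ℓ ih =>
    cases i with
    | zero => simp [ol]
    | succ i =>
      rw [ol, List.getElem?_cons_succ, ih]
      push_cast
      rw [show (ℓ : ℤ) + 1 - (i + 1) - C = ℓ - i - C by ring]
      simp

theorem ol_count (C : ℕ) (β : YoungDiagram) (ℓ m : ℕ) (hm : m ≤ ℓ) :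
    ((ol C β ℓ).take m).count true = rho β ((ℓ : ℤ) - m - C) - rho β ((ℓ : ℤ) - C) := by
  have hanti : Antitone (rho β) := antitone_int_of_succ_le (rho_succ_le β)
  induction ℓ generalizing m with
  | zero => obtain rfl : m = 0 := by omega
            simp
  | succ ℓ ih =>
    cases m with
    | zero => simp
    | succ m =>
      rw [ol, List.take_succ_cons, List.count_cons, ih m (by omega)]
      push_cast
      rw [show (ℓ : ℤ) + 1 - (m + 1) - C = ℓ - m - C by ring]
      have h1 : rho β ((ℓ : ℤ) - C) ≤ rho β ((ℓ : ℤ) - m - C) := hanti (by omega)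
      by_cases ho : occ β ((ℓ : ℤ) + 1 - C)
      · have h2 := ho
        rw [occ, show (ℓ : ℤ) + 1 - C - 1 = ℓ - C by ring] at h2
        simp [ho]; omega
      · have h2 := not_occ.1 ho
        rw [show (ℓ : ℤ) + 1 - C - 1 = ℓ - C by ring] at h2
        simp [ho]; omega

theorem ol_eq_iff {C : ℕ} {β γ : YoungDiagram} {ℓ : ℕ} :
    ol C β ℓ = ol C γ ℓ ↔ ∀ p : ℤ, -(C : ℤ) < p → p ≤ ℓ - C → (occ β p ↔ occ γ p) := by
  constructor
  · intro h p h1 h2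
    have := congrArg (fun l => l[(ℓ - C - p).toNat]?) h
    simp only [ol_getElem?] at this
    rw [if_pos (by omega), if_pos (by omega)] at this
    rw [show (ℓ : ℤ) - ((ℓ - C - p).toNat : ℤ) - C = p by omega] at this
    simpa using this
  · intro h
    refine List.ext_getElem? fun i => ?_
    rw [ol_getElem?, ol_getElem?]
    split_ifs with hi
    · simp [h ((ℓ : ℤ) - i - C) (by omega) (by omega)]
    · rfl

theorem Step.ol_eq {n : ℕ} (hn : 1 ≤ n) {C ℓ : ℕ} {γ β : YoungDiagram}
    (hS : Step n ((ℓ : ℤ) - C) γ β) : ol C γ ℓ = (ol C β ℓ).set (n - 1) true := by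
  refine List.ext_getElem? fun i => ?_
  rw [List.getElem?_set, ol_getElem?, ol_getElem?, ol_length]
  obtain ⟨-, -, -, h4⟩ := hS.occ_top hn
  by_cases hi : n - 1 = i
  · subst hi
    rw [if_pos rfl]
    split_ifs
    · rw [show (ℓ : ℤ) - (n - 1 : ℕ) - C = ℓ - C + 1 - n by omega]
      simp [h4]
    · rfl
  · rw [if_neg hi]
    split_ifs
    · simp [hS.occ_iff (p := (ℓ : ℤ) - i - C) (by omega) (by omega)]
    · rfl

/-- A step exists exactly when the corresponding bead jump is possible. -/
theorem exists_step_iff {n : ℕ} (hn : 1 ≤ n) {β lam : YoungDiagram} (hβ : β ≤ lam) (ℓ : ℕ) :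
    (∃ γ, Step n ((ℓ : ℤ) - bd lam) γ β) ↔
      occ β ((ℓ : ℤ) + 1 - bd lam) ∧ (ol (bd lam) β ℓ)[n - 1]? = some false := by
  have e1 : (ℓ : ℤ) - bd lam + 1 = ℓ + 1 - bd lam := by ring
  constructor
  · rintro ⟨γ, hS⟩
    obtain ⟨h1, -, h3, -⟩ := hS.occ_top hn
    rw [e1] at h1 h3
    refine ⟨h1, ?_⟩
    have : ¬ ((ℓ : ℤ) + 1 - bd lam - n ≤ -(bd lam : ℤ)) := fun h => h3 (occ_left hβ h)
    rw [ol_getElem?, if_pos (by omega),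
      show (ℓ : ℤ) - (n - 1 : ℕ) - bd lam = ℓ + 1 - bd lam - n by omega]
    simp [h3]
  · rintro ⟨h1, h2⟩
    rw [ol_getElem?] at h2
    split_ifs at h2
    rw [show (ℓ : ℤ) - (n - 1 : ℕ) - bd lam = ℓ + 1 - bd lam - n by omega] at h2
    refine exists_step hn (by rwa [e1]) ?_
    rw [e1]; simpa using h2

/-- The part of the horizontal strip generating function with contents below a bound is the
bead jump generating function of the occupation lists up to that bound. -/
theorem Gk_eq_P {K : Type*} [CommRing K] (q x : K) {n : ℕ} (hn : 1 ≤ n) {lam : YoungDiagram}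
    (ℓ : ℕ) {α ε : YoungDiagram} (hα : α ≤ lam) (hε : ε ≤ lam) :
    Gk (fun R => x * q ^ ribbonSpin R) n ((ℓ : ℤ) - bd lam - 1) α ε =
      if ∀ p : ℤ, ℓ - bd lam < p → (occ α p ↔ occ ε p) then
        P q x (n - 1) (ol (bd lam) α ℓ) (ol (bd lam) ε ℓ) else 0 := by
  induction ℓ generalizing ε with
  | zero =>
    rw [Gk_low _ hn hε (by push_cast; omega)]
    refine if_congr ⟨fun h => h ▸ fun _ _ => Iff.rfl, fun h => occ_inj hα hε fun p h1 _ => h p ?_⟩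
      (by simp [ol, P]) rfl
    push_cast; omega
  | succ ℓ ih =>
    rw [show ((ℓ + 1 : ℕ) : ℤ) - bd lam - 1 = ℓ - bd lam by push_cast; ring]
    have hag : ∀ {ε' : YoungDiagram}, (∀ p : ℤ, (ℓ : ℤ) - bd lam < p → (occ α p ↔ occ ε' p)) ↔
        (∀ p : ℤ, ((ℓ + 1 : ℕ) : ℤ) - bd lam < p → (occ α p ↔ occ ε' p)) ∧
          (occ α ((ℓ : ℤ) + 1 - bd lam) ↔ occ ε' ((ℓ : ℤ) + 1 - bd lam)) := by
      intro ε'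
      refine ⟨fun h => ⟨fun p hp => h p (by push_cast at hp; omega), h _ (by omega)⟩,
        fun h p hp => ?_⟩
      rcases eq_or_ne p ((ℓ : ℤ) + 1 - bd lam) with rfl | hne
      · exact h.2
      · exact h.1 p (by push_cast; omega)
    simp only [ol, P, decide_eq_true_eq, decide_eq_false_iff_not]
    by_cases hS : ∃ γ, Step n ((ℓ : ℤ) - bd lam) γ ε
    · have hj := (exists_step_iff hn hε ℓ).1 hS
      obtain ⟨γ, hS⟩ := hS
      rw [Gk_of_step _ hn α hS, ih hε, ih (hS.le.trans hε)]
      obtain ⟨h1, h2, h3, h4⟩ := hS.occ_top hn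
      rw [show (ℓ : ℤ) - bd lam + 1 = ℓ + 1 - bd lam by ring] at h1 h2 h3 h4
      have hlt : n - 1 < ℓ := by
        by_contra hc
        have := hj.2
        rw [ol_getElem?, if_neg hc] at this
        simp at this
      have hup : (∀ p : ℤ, ((ℓ + 1 : ℕ) : ℤ) - bd lam < p → (occ α p ↔ occ γ p)) ↔
          (∀ p : ℤ, ((ℓ + 1 : ℕ) : ℤ) - bd lam < p → (occ α p ↔ occ ε p)) := by
        refine forall_congr' fun p => imp_congr_right fun hp => ?_
        push_cast at hp
        rw [hS.occ_iff (by omega) (by omega)]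
      rw [hS.ol_eq hn, hS.spin hn, ol_count _ _ _ _ hlt.le,
        show (ℓ : ℤ) - bd lam - n + 1 = ℓ - (n - 1 : ℕ) - bd lam by omega]
      simp only [hag, hup, h1, h2, hj.2, iff_true, iff_false, and_true, decide_true]
      generalize (∀ p : ℤ, ((ℓ + 1 : ℕ) : ℤ) - bd lam < p → (occ α p ↔ occ ε p)) = A
      by_cases hA : A <;> by_cases ha : occ α ((ℓ : ℤ) + 1 - bd lam) <;> simp [ha, hA] <;> ring
    · rw [Gk_of_not_step _ hn α hS, ih hε]
      have hj := mt (exists_step_iff hn hε ℓ).2 hS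
      rw [if_neg (c := _ ∧ _) (fun h => hj h.2), add_zero]
      simp only [hag, decide_eq_decide]
      by_cases h1 : (occ α ((ℓ : ℤ) + 1 - bd lam) ↔ occ ε ((ℓ : ℤ) + 1 - bd lam)) <;> simp [h1]

theorem exists_of_P_ne_zero {K : Type*} [CommRing K] (q x : K) {n : ℕ} (hn : 1 ≤ n)
    {lam : YoungDiagram} (ℓ : ℕ) {ε : YoungDiagram} (hε : ε ≤ lam) {c : List Bool}
    (hc : P q x (n - 1) c (ol (bd lam) ε ℓ) ≠ 0) :
    ∃ γ ≤ lam, (∀ p : ℤ, (ℓ : ℤ) - bd lam < p → (occ γ p ↔ occ ε p)) ∧ ol (bd lam) γ ℓ = c := by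
  induction ℓ generalizing ε c with
  | zero =>
    refine ⟨ε, hε, fun _ _ => Iff.rfl, ?_⟩
    cases c with
    | nil => rfl
    | cons a as => simp [ol, P] at hc
  | succ ℓ ih =>
    cases c with
    | nil => simp [ol, P] at hc
    | cons a as =>
      rw [ol, P] at hc
      by_cases h1 : a = decide (occ ε ((ℓ : ℤ) + 1 - bd lam)) ∧
          P q x (n - 1) as (ol (bd lam) ε ℓ) ≠ 0
      · obtain ⟨γ, hγ, hag, hol⟩ := ih hε h1.2
        refine ⟨γ, hγ, fun p hp => hag p (by push_cast at hp; omega), ?_⟩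
        rw [ol, hol, h1.1]
        simp [hag ((ℓ : ℤ) + 1 - bd lam) (by omega)]
      · have h0 : (if a = decide (occ ε ((ℓ : ℤ) + 1 - bd lam)) then
            P q x (n - 1) as (ol (bd lam) ε ℓ) else 0) = 0 := by
          split_ifs with h
          · by_contra h2; exact h1 ⟨h, h2⟩
          · rfl
        rw [h0, zero_add] at hc
        split_ifs at hc with h2
        · obtain ⟨ha, hoc, hj⟩ := h2
          obtain ⟨δ, hS⟩ := (exists_step_iff hn hε ℓ).2 ⟨by simpa using hoc, hj⟩
          rw [← hS.ol_eq hn] at hc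
          obtain ⟨γ, hγ, hag, hol⟩ := ih (hS.le.trans hε) (right_ne_zero_of_mul hc)
          obtain ⟨-, h3, -, -⟩ := hS.occ_top hn
          rw [show (ℓ : ℤ) - bd lam + 1 = ℓ + 1 - bd lam by ring] at h3
          refine ⟨γ, hγ, fun p hp => ?_, ?_⟩
          · push_cast at hp
            rw [hag p (by omega), hS.occ_iff (by omega) (by omega)]
          · rw [ol, hol, ha]
            simp [hag ((ℓ : ℤ) + 1 - bd lam) (by omega), h3]
        · exact absurd rfl hc

/-- The partitions contained in `lam`. -/
abbrev Sub (lam : YoungDiagram) : Type := {ν : YoungDiagram // ν ≤ lam}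

instance (lam : YoungDiagram) : Finite (Sub lam) :=
  Finite.of_injective
    (fun ν : Sub lam => (⟨ν.1.cells, Finset.mem_powerset.2 ν.2⟩ : {s // s ∈ lam.cells.powerset}))
    fun ν ν' h => Subtype.ext (YoungDiagram.ext (congrArg Subtype.val h))

noncomputable instance (lam : YoungDiagram) : Fintype (Sub lam) := Fintype.ofFinite _

/-- The transfer matrix of horizontal `n`-ribbon strips, on the partitions contained in `lam`. -/
noncomputable def Hm {K : Type*} [CommRing K] (q : K) (n : ℕ) (lam : YoungDiagram) (x : K) :
    Matrix (Sub lam) (Sub lam) K :=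
  fun α β => Gk (fun R => x * q ^ ribbonSpin R) n ((bd lam : ℤ) - 1) α.1 β.1

theorem Hm_eq_P {K : Type*} [CommRing K] (q x : K) {n : ℕ} (hn : 1 ≤ n) {lam : YoungDiagram}
    (α β : Sub lam) :
    Hm q n lam x α β = P q x (n - 1) (ol (bd lam) α.1 (2 * bd lam))
      (ol (bd lam) β.1 (2 * bd lam)) := by
  have := Gk_eq_P q x hn (2 * bd lam) α.2 β.2
  rw [if_pos, show ((2 * bd lam : ℕ) : ℤ) - bd lam - 1 = bd lam - 1 by push_cast; ring] at this
  · exact this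
  · intro p hp
    push_cast at hp
    exact iff_of_false (not_occ_right α.2 (by omega)) (not_occ_right β.2 (by omega))

theorem ol_injective {lam : YoungDiagram} {α β : Sub lam}
    (h : ol (bd lam) α.1 (2 * bd lam) = ol (bd lam) β.1 (2 * bd lam)) : α = β :=
  Subtype.ext <| occ_inj α.2 β.2 fun p h1 h2 => ol_eq_iff.1 h p h1 (by push_cast; omega)

theorem Hm_mul {K : Type*} [CommRing K] (q x y : K) {n : ℕ} (hn : 1 ≤ n) {lam : YoungDiagram}
    (α β : Sub lam) :
    (Hm q n lam x * Hm q n lam y) α β = sumL (2 * bd lam) fun c =>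
      P q x (n - 1) (ol (bd lam) α.1 (2 * bd lam)) c *
        P q y (n - 1) c (ol (bd lam) β.1 (2 * bd lam)) := by
  rw [Matrix.mul_apply]
  have key : ∀ c : List Bool,
      P q x (n - 1) (ol (bd lam) α.1 (2 * bd lam)) c *
        P q y (n - 1) c (ol (bd lam) β.1 (2 * bd lam)) =
      ∑ γ : Sub lam, if c = ol (bd lam) γ.1 (2 * bd lam) then
        P q x (n - 1) (ol (bd lam) α.1 (2 * bd lam)) c *
          P q y (n - 1) c (ol (bd lam) β.1 (2 * bd lam)) else 0 := by
    intro c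
    by_cases h : ∃ γ : Sub lam, c = ol (bd lam) γ.1 (2 * bd lam)
    · obtain ⟨γ, rfl⟩ := h
      rw [Finset.sum_eq_single γ]
      · rw [if_pos rfl]
      · intro δ _ hne
        rw [if_neg fun h => hne (ol_injective h).symm]
      · simp
    · have h0 : P q y (n - 1) c (ol (bd lam) β.1 (2 * bd lam)) = 0 := by
        by_contra hc
        obtain ⟨γ, hγ, -, hol⟩ := exists_of_P_ne_zero q y hn _ β.2 hc
        exact h ⟨⟨γ, hγ⟩, hol.symm⟩
      simp [h0]
  rw [sumL_congr fun c _ => key c, sumL_sum]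
  refine Finset.sum_congr rfl fun γ _ => ?_
  rw [sumL_eq_single (ol (bd lam) γ.1 (2 * bd lam)) (ol_length _ _ _) fun v _ hv => if_neg hv,
    if_pos rfl, Hm_eq_P q x hn, Hm_eq_P q y hn]

/-- Horizontal strip transfer matrices with different variables commute. -/
theorem Hm_comm {K : Type*} [Field K] {q x y : K} (hq : q ≠ 0) (hx : x ≠ 0) {n : ℕ} (hn : 1 ≤ n)
    (lam : YoungDiagram) : Hm q n lam x * Hm q n lam y = Hm q n lam y * Hm q n lam x := by
  ext α β
  rw [Hm_mul q x y hn, Hm_mul q y x hn]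
  have := sumL_P_comm hq hx (x₂ := y) (n - 1) (ol (bd lam) α.1 (2 * bd lam))
    (ol (bd lam) β.1 (2 * bd lam))
  rwa [ol_length] at this

end SuperRibbon

namespace SuperRibbon

/-! ### Vertical strips as inverses of horizontal strips -/

theorem mem_swapCells {S : Finset Cell} {c : Cell} : c ∈ swapCells S ↔ c.swap ∈ S := by
  simp only [swapCells, Finset.mem_image]
  constructor
  · rintro ⟨d, hd, rfl⟩; simpa using hd
  · intro h; exact ⟨_, h, by simp⟩

@[simp] theorem swapCells_swapCells (S : Finset Cell) : swapCells (swapCells S) = S := by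
  ext c; simp [mem_swapCells]

theorem swapCells_sdiff (α β : YoungDiagram) :
    swapCells (β.cells \ α.cells) = β.transpose.cells \ α.transpose.cells := by
  ext c
  simp [mem_swapCells, YoungDiagram.mem_transpose]

theorem swapCells_mono {S T : Finset Cell} (h : S ⊆ T) : swapCells S ⊆ swapCells T :=
  Finset.image_subset_image h

theorem bd_transpose (lam : YoungDiagram) : bd lam.transpose = bd lam := by
  simp only [bd, YoungDiagram.colLen_transpose, YoungDiagram.rowLen_transpose]; omega

theorem ct_swap (c : Cell) : ct c.swap = -ct c := by simp [ct]

theorem IsRib.swap {n : ℕ} {h : ℤ} {R : Finset Cell} (H : IsRib n h R) :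
    IsRib n ((n : ℤ) - 1 - h) (swapCells R) := by
  refine ⟨fun x hx y hy hxy => ?_, fun x hx => ?_, fun t h1 h2 => ?_, fun x hx y hy hxy => ?_⟩
  · rw [mem_swapCells] at hx hy
    exact Prod.swap_injective (H.inj _ hx _ hy (by rw [ct_swap, ct_swap, hxy]))
  · have := H.range _ (mem_swapCells.1 hx)
    rw [ct_swap] at this
    omega
  · obtain ⟨c, hc, hct⟩ := H.surj (-t) (by omega) (by omega)
    exact ⟨c.swap, mem_swapCells.2 (by simpa using hc), by rw [ct_swap, hct, neg_neg]⟩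
  · rw [mem_swapCells] at hx hy
    have := H.adj _ hy _ hx (by rw [ct_swap, ct_swap]; omega)
    rcases this with h | h
    · right; ext <;> [have := congrArg Prod.snd h; have := congrArg Prod.fst h] <;> simp at this ⊢ <;> omega
    · left; ext <;> [have := congrArg Prod.snd h; have := congrArg Prod.fst h] <;> simp at this ⊢ <;> omega

theorem Step.transpose {n : ℕ} {h : ℤ} {γ β : YoungDiagram} (H : Step n h γ β) :
    Step n ((n : ℤ) - 1 - h) γ.transpose β.transpose := by
  refine IsRib.step (YoungDiagram.transpose_mono H.le) ?_
  rw [← swapCells_sdiff]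
  exact H.isRib.swap

theorem step_transpose_iff {n : ℕ} {h : ℤ} {γ β : YoungDiagram} :
    Step n h γ.transpose β.transpose ↔ Step n ((n : ℤ) - 1 - h) γ β := by
  constructor
  · intro H
    simpa using H.transpose
  · intro H
    have := H.transpose
    rwa [show (n : ℤ) - 1 - (n - 1 - h) = h by ring] at this

section
variable {K : Type*} [CommRing K] (q : K) (n : ℕ) (lam : YoungDiagram)

/-- The operator adding a single `n`-ribbon whose largest content is `k`. -/
noncomputable def Um (k : ℤ) (x : K) : Matrix (Sub lam) (Sub lam) K :=
  fun γ β => if Step n k γ.1 β.1 then x * q ^ ribbonSpin (β.1.cells \ γ.1.cells) else 0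

/-- The transfer matrix of horizontal strips all of whose contents are at most `k`. -/
noncomputable def Hk (x : K) (k : ℤ) : Matrix (Sub lam) (Sub lam) K :=
  fun α β => Gk (fun R => x * q ^ ribbonSpin R) n k α.1 β.1

/-- The transfer matrix of vertical strips all of whose contents are at least `-k`, obtained
by conjugation. -/
noncomputable def Vk (y : K) (k : ℤ) : Matrix (Sub lam) (Sub lam) K :=
  fun α β => Gk (fun R => y * q ^ ribbonSpin (swapCells R)) n k α.1.transpose β.1.transpose

/-- The transfer matrix of vertical `n`-ribbon strips, on the partitions contained in `lam`. -/
noncomputable def Vm (y : K) : Matrix (Sub lam) (Sub lam) K := Vk q n lam y ((bd lam : ℤ) - 1)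

theorem Um_neg (k : ℤ) (x : K) : Um q n lam k (-x) = -Um q n lam k x := by
  ext γ β
  simp only [Um, Matrix.neg_apply]
  split_ifs <;> simp

variable {n} in
theorem Um_sq (hn : 1 ≤ n) (k : ℤ) (x : K) : Um q n lam k x * Um q n lam k x = 0 := by
  ext α β
  rw [Matrix.mul_apply]
  refine Finset.sum_eq_zero fun γ _ => ?_
  simp only [Um]
  -- the first step leaves position `k + 1` occupied, the second one requires it to be vacant
  split_ifs with h1 h2
  · exact absurd (h1.occ_top hn).1 (h2.occ_top hn).2.1
  all_goals simp

variable {n} in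
theorem Hk_succ (hn : 1 ≤ n) (x : K) (k : ℤ) :
    Hk q n lam x k = Hk q n lam x (k - 1) * (1 + Um q n lam k x) := by
  ext α β
  rw [mul_add, mul_one, Matrix.add_apply, Matrix.mul_apply]
  by_cases hS : ∃ γ, Step n k γ β.1
  · obtain ⟨γ, hS⟩ := hS
    rw [Finset.sum_eq_single (⟨γ, hS.le.trans β.2⟩ : Sub lam)]
    · simp only [Um, if_pos hS, Hk]
      rw [Gk_of_step _ hn _ hS]
    · intro δ _ hne
      rw [Um, if_neg fun h => hne (Subtype.ext (h.unique hS)), mul_zero]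
    · simp
  · rw [Finset.sum_eq_zero fun γ _ => ?_]
    · simp only [Hk, add_zero]
      rw [Gk_of_not_step _ hn _ hS]
    · rw [Um, if_neg fun h => hS ⟨_, h⟩, mul_zero]

variable {n} in
theorem Vk_succ (hn : 1 ≤ n) (y : K) (k : ℤ) :
    Vk q n lam y k = Vk q n lam y (k - 1) * (1 + Um q n lam ((n : ℤ) - 1 - k) y) := by
  ext α β
  rw [mul_add, mul_one, Matrix.add_apply, Matrix.mul_apply]
  by_cases hS : ∃ γ, Step n ((n : ℤ) - 1 - k) γ β.1
  · obtain ⟨γ, hS⟩ := hS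
    rw [Finset.sum_eq_single (⟨γ, hS.le.trans β.2⟩ : Sub lam)]
    · simp only [Um, if_pos hS, Vk]
      rw [Gk_of_step _ hn _ (step_transpose_iff.2 hS), ← swapCells_sdiff, swapCells_swapCells]
    · intro δ _ hne
      rw [Um, if_neg fun h => hne (Subtype.ext (h.unique hS)), mul_zero]
    · simp
  · rw [Finset.sum_eq_zero fun γ _ => ?_]
    · simp only [Vk, add_zero]
      rw [Gk_of_not_step _ hn]
      rintro ⟨γ, h⟩
      refine hS ⟨γ.transpose, step_transpose_iff.1 ?_⟩
      rwa [YoungDiagram.transpose_transpose]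
    · rw [Um, if_neg fun h => hS ⟨_, h⟩, mul_zero]

variable {n} in
theorem Hk_low (hn : 1 ≤ n) (x : K) {k : ℤ} (hk : k ≤ -(bd lam : ℤ)) : Hk q n lam x k = 1 := by
  ext α β
  rw [Hk, Gk_low _ hn β.2 hk, Matrix.one_apply]
  simp only [Subtype.ext_iff]

variable {n} in
theorem Vk_low (hn : 1 ≤ n) (y : K) {k : ℤ} (hk : k ≤ -(bd lam : ℤ)) : Vk q n lam y k = 1 := by
  ext α β
  rw [Vk, Gk_low _ hn (YoungDiagram.transpose_mono β.2) (by rwa [bd_transpose]), Matrix.one_apply]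
  simp only [YoungDiagram.transpose_eq_iff, Subtype.ext_iff]

theorem Hk_high (x : K) {k : ℤ} (hk : (bd lam : ℤ) - 1 ≤ k) : Hk q n lam x k = Hm q n lam x := by
  ext α β
  rw [Hk, Hm, Gk_high _ β.2 hk, Gk_high _ β.2 le_rfl]

theorem Vk_high (y : K) {k : ℤ} (hk : (bd lam : ℤ) - 1 ≤ k) : Vk q n lam y k = Vm q n lam y := by
  ext α β
  rw [Vm, Vk, Vk, Gk_high _ (YoungDiagram.transpose_mono β.2) (by rwa [bd_transpose]),
    Gk_high _ (YoungDiagram.transpose_mono β.2) (by rw [bd_transpose])]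

variable {n} in
/-- The factors `1 + y u` of the vertical transfer matrix occur in the opposite order to the
factors `1 - y u` of the horizontal one, and since `u ^ 2 = 0` they cancel one by one. -/
theorem Vm_mul_Hm_neg (hn : 1 ≤ n) (y : K) : Vm q n lam y * Hm q n lam (-y) = 1 := by
  have key : ∀ i : ℕ, i ≤ n - 1 + 2 * bd lam →
      Vk q n lam y ((n : ℤ) - 1 + bd lam) * Hk q n lam (-y) (-(bd lam : ℤ) - 1 + i) =
        Vk q n lam y ((n : ℤ) - 1 + bd lam - i) := by
    intro i
    induction i with
    | zero => intro _; rw [Hk_low q lam hn _ (by push_cast; omega)]; simp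
    | succ i ih =>
      intro hi
      rw [Hk_succ q lam hn, ← mul_assoc,
        show -(bd lam : ℤ) - 1 + (i + 1 : ℕ) - 1 = -(bd lam : ℤ) - 1 + i by push_cast; ring,
        ih (by omega), Vk_succ q lam hn,
        show (n : ℤ) - 1 - (n - 1 + bd lam - i) = -(bd lam : ℤ) - 1 + (i + 1 : ℕ) by
          push_cast; ring, mul_assoc, Um_neg]
      have hsq : (1 + Um q n lam (-(bd lam : ℤ) - 1 + (i + 1 : ℕ)) y) *
          (1 + -Um q n lam (-(bd lam : ℤ) - 1 + (i + 1 : ℕ)) y) = 1 := by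
        have := Um_sq q lam hn (-(bd lam : ℤ) - 1 + (i + 1 : ℕ)) y
        rw [add_mul, one_mul, mul_add, mul_one, mul_neg, this]
        abel
      rw [hsq, mul_one]
      congr 1
      push_cast; ring
  have := key (n - 1 + 2 * bd lam) le_rfl
  rwa [Vk_high q n lam _ (by omega), Hk_high q n lam _ (by push_cast; omega),
    Vk_low q lam hn _ (by push_cast; omega)] at this

end

theorem commute_of_inv {R : Type*} [Monoid R] {a b c : R} (h1 : c * a = 1) (h2 : a * c = 1)
    (h : a * b = b * a) : c * b = b * c :=
  calc c * b = c * (b * a) * c := by rw [mul_assoc c, mul_assoc b, h2, mul_one]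
    _ = b * c := by rw [← h, ← mul_assoc c, h1, one_mul]

theorem Vm_Hm_comm {K : Type*} [Field K] {q x y : K} (hq : q ≠ 0) (hy : y ≠ 0) {n : ℕ}
    (hn : 1 ≤ n) (lam : YoungDiagram) :
    Vm q n lam y * Hm q n lam x = Hm q n lam x * Vm q n lam y :=
  commute_of_inv (Vm_mul_Hm_neg q lam hn y) (mul_eq_one_comm.1 (Vm_mul_Hm_neg q lam hn y))
    (Hm_comm hq (neg_ne_zero.2 hy) hn lam)

theorem Vm_comm {K : Type*} [Field K] {q x y : K} (hq : q ≠ 0) (hx : x ≠ 0) {n : ℕ}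
    (hn : 1 ≤ n) (lam : YoungDiagram) :
    Vm q n lam y * Vm q n lam x = Vm q n lam x * Vm q n lam y :=
  commute_of_inv (Vm_mul_Hm_neg q lam hn y) (mul_eq_one_comm.1 (Vm_mul_Hm_neg q lam hn y))
    (Vm_Hm_comm hq hx hn lam).symm

theorem Hm_eq_sum {K : Type*} [CommRing K] (q x : K) (n : ℕ) {lam : YoungDiagram}
    (α β : Sub lam) :
    Hm q n lam x α β = ∑ T ∈ lam.cells.powerset.powerset,
      if α.1 ≤ β.1 ∧ IsHStripTiling n (β.1.cells \ α.1.cells) T then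
        ∏ R ∈ T, x * q ^ ribbonSpin R else 0 := by
  rw [Hm, Gk_high _ β.2 le_rfl, Finset.sum_filter]
  refine Finset.sum_subset (Finset.powerset_mono.2 (Finset.powerset_mono.2
    (Finset.sdiff_subset.trans β.2))) fun T _ hT => if_neg fun h => hT ?_
  rw [Finset.mem_powerset]
  intro R hR
  rw [Finset.mem_powerset, ← h.2.1.2.2]
  exact Finset.subset_biUnion_of_mem id hR

theorem image_swapCells_image (T : Finset (Finset Cell)) :
    (T.image swapCells).image swapCells = T := by
  rw [Finset.image_image]
  simp [Function.comp_def]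

theorem swapCells_injective : Function.Injective swapCells :=
  Function.LeftInverse.injective swapCells_swapCells

theorem Vm_eq_sum {K : Type*} [CommRing K] (q y : K) (n : ℕ) {lam : YoungDiagram}
    (α β : Sub lam) :
    Vm q n lam y α β = ∑ T ∈ lam.cells.powerset.powerset,
      if α.1 ≤ β.1 ∧ IsVStripTiling n (β.1.cells \ α.1.cells) T then
        ∏ R ∈ T, y * q ^ ribbonSpin R else 0 := by
  rw [Vm, Vk, Gk_high _ (YoungDiagram.transpose_mono β.2) (by rw [bd_transpose]),
    ← Finset.sum_filter]
  refine Finset.sum_bij' (fun T _ => T.image swapCells) (fun T _ => T.image swapCells)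
    ?_ ?_ (fun T _ => image_swapCells_image T) (fun T _ => image_swapCells_image T) ?_
  · intro T hT
    rw [Finset.mem_filter] at hT ⊢
    refine ⟨?_, YoungDiagram.transpose_le_iff.1 hT.2.1, ?_⟩
    · simp only [Finset.mem_powerset, Finset.subset_iff, Finset.mem_image] at hT ⊢
      rintro R ⟨R', hR', rfl⟩ c hc
      have := hT.1 hR' (mem_swapCells.1 hc)
      rw [← swapCells_sdiff, mem_swapCells, Prod.swap_swap, Finset.mem_sdiff] at this
      exact β.2 this.1
    · rw [IsVStripTiling, image_swapCells_image, swapCells_sdiff]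
      exact hT.2.2
  · intro T hT
    rw [Finset.mem_filter] at hT ⊢
    obtain ⟨-, hle, hV⟩ := hT
    rw [IsVStripTiling, swapCells_sdiff] at hV
    refine ⟨?_, YoungDiagram.transpose_mono hle, hV⟩
    rw [Finset.mem_powerset]
    intro R hR
    rw [Finset.mem_powerset, ← hV.1.2.2]
    exact Finset.subset_biUnion_of_mem id hR
  · intro T hT
    rw [Finset.prod_image fun a _ b _ h => swapCells_injective h]

end SuperRibbon

namespace SuperRibbon

/-! ### The super ribbon function as a matrix entry -/

/-- The transfer matrix of a letter: horizontal strips for the first alphabet, vertical strips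
for the second one. -/
noncomputable def Lm {K A B : Type*} [CommRing K] (q : K) (n : ℕ) (lam : YoungDiagram)
    (s : A ⊕ B) (x : K) : Matrix (Sub lam) (Sub lam) K :=
  Sum.elim (fun _ => Hm q n lam x) (fun _ => Vm q n lam x) s

/-- `T` is the tiling of a strip of the kind prescribed by the letter `s`. -/
def IsST {A B : Type*} (n : ℕ) (s : A ⊕ B) (S : Finset Cell) (T : Finset (Finset Cell)) : Prop :=
  Sum.elim (fun _ => IsHStripTiling n S T) (fun _ => IsVStripTiling n S T) s

theorem IsST.subset {A B : Type*} {n : ℕ} {s : A ⊕ B} {S : Finset Cell} {T : Finset (Finset Cell)}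
    (h : IsST n s S T) {R : Finset Cell} (hR : R ∈ T) : R ⊆ S := by
  rcases s with s | s
  · have h' : IsHStripTiling n S T := h
    rw [← h'.1.2.2]
    exact Finset.subset_biUnion_of_mem id hR
  · have h' : IsHStripTiling n (swapCells S) (T.image swapCells) := h
    have : swapCells R ⊆ swapCells S := by
      rw [← h'.1.2.2]
      exact Finset.subset_biUnion_of_mem id (Finset.mem_image_of_mem _ hR)
    simpa using swapCells_mono this

theorem Lm_eq_sum {K A B : Type*} [CommRing K] (q x : K) (n : ℕ) {lam : YoungDiagram}
    (s : A ⊕ B) (α β : Sub lam) :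
    Lm q n lam s x α β = ∑ T ∈ lam.cells.powerset.powerset,
      if α.1 ≤ β.1 ∧ IsST n s (β.1.cells \ α.1.cells) T then
        ∏ R ∈ T, x * q ^ ribbonSpin R else 0 := by
  rcases s with s | s
  · exact Hm_eq_sum q x n α β
  · exact Vm_eq_sum q x n α β

theorem Lm_map {K K' A B : Type*} [CommRing K] [CommRing K'] (f : K →+* K') (q x : K) (n : ℕ)
    (lam : YoungDiagram) (s : A ⊕ B) :
    (Lm q n lam s x).map f = Lm (f q) n lam s (f x) := by
  ext α β
  rw [Matrix.map_apply, Lm_eq_sum, Lm_eq_sum, map_sum]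
  refine Finset.sum_congr rfl fun T _ => ?_
  split_ifs
  · simp
  · simp

theorem Lm_comm_field {K A B : Type*} [Field K] {q x y : K} (hq : q ≠ 0) (hx : x ≠ 0) (hy : y ≠ 0)
    {n : ℕ} (hn : 1 ≤ n) (lam : YoungDiagram) (s t : A ⊕ B) :
    Lm q n lam s x * Lm q n lam t y = Lm q n lam t y * Lm q n lam s x := by
  rcases s with s | s <;> rcases t with t | t
  · exact Hm_comm hq hx hn lam
  · exact (Vm_Hm_comm hq hy hn lam).symm
  · exact Vm_Hm_comm hq hx hn lam
  · exact Vm_comm hq hy hn lam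

theorem Lm_comm {K A B : Type*} [CommRing K] [IsDomain K] {q x y : K} (hq : q ≠ 0) (hx : x ≠ 0)
    (hy : y ≠ 0) {n : ℕ} (hn : 1 ≤ n) (lam : YoungDiagram) (s t : A ⊕ B) :
    Lm q n lam s x * Lm q n lam t y = Lm q n lam t y * Lm q n lam s x := by
  have hinj : Function.Injective (algebraMap K (FractionRing K)) :=
    IsFractionRing.injective K (FractionRing K)
  have h0 : ∀ {a : K}, a ≠ 0 → algebraMap K (FractionRing K) a ≠ 0 := fun h =>
    (map_ne_zero_iff _ hinj).2 h
  refine Matrix.map_injective hinj ?_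
  beta_reduce
  rw [Matrix.map_mul, Matrix.map_mul, Lm_map, Lm_map]
  exact Lm_comm_field (h0 hq) (h0 hx) (h0 hy) hn lam s t

/-- Entries of a product of matrices as sums over paths. -/
theorem prod_ofFn_apply {K J : Type*} [CommRing K] [Fintype J] [DecidableEq J] (L : ℕ)
    (D : Fin L → Matrix J J K) (a b : J) :
    (List.ofFn D).prod a b = ∑ c : Fin (L + 1) → J,
      if c 0 = a ∧ c (Fin.last L) = b then ∏ t, D t (c t.castSucc) (c t.succ) else 0 := by
  induction L generalizing a with
  | zero =>
    rw [List.ofFn_zero, List.prod_nil, Matrix.one_apply,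
      ← (Equiv.funUnique (Fin 1) J).symm.sum_comp]
    simp only [Finset.univ_eq_empty, Finset.prod_empty, Fin.last_zero]
    have : ∀ j : J, (Equiv.funUnique (Fin 1) J).symm j 0 = j := fun j => rfl
    simp only [this]
    by_cases h : a = b
    · subst h; simp
    · rw [if_neg h, Finset.sum_eq_zero]
      intro j _
      rw [if_neg]
      rintro ⟨rfl, rfl⟩
      exact h rfl
  | succ L ih =>
    rw [List.ofFn_succ, List.prod_cons, Matrix.mul_apply,
      ← (Fin.consEquiv fun _ : Fin (L + 2) => J).sum_comp, Fintype.sum_prod_type]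
    simp only [ih, Finset.mul_sum]
    rw [Finset.sum_comm, eq_comm, Finset.sum_eq_single a]
    · refine Finset.sum_congr rfl fun c _ => ?_
      rw [Finset.sum_eq_single (c 0)]
      · simp only [Fin.consEquiv, Equiv.coe_fn_mk, Fin.cons_zero, true_and, mul_ite, mul_zero,
          Fin.prod_univ_succ, Fin.castSucc_zero, Fin.cons_succ, ← Fin.succ_last,
          ← Fin.succ_castSucc]
      · intro j _ hj
        rw [if_neg fun h => hj h.1.symm, mul_zero]
      · simp
    · intro j _ hj
      refine Finset.sum_eq_zero fun c _ => if_neg fun h => hj ?_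
      simpa [Fin.consEquiv] using h.1
    · simp

/-- Super ribbon tableaux are chains in `Sub lam` together with a tiling for each letter. -/
theorem superRibbonFn_eq (n N M : ℕ) (e : Fin (N + M) ≃ (Fin N ⊕ Fin M))
    (lam mu : YoungDiagram) (hsub : mu ≤ lam) :
    superRibbonFn n N M e lam mu =
      (List.ofFn fun t => Lm (MvPolynomial.C Polynomial.X) n lam (e t)
        (MvPolynomial.X (e t) : MvPolynomial (Fin N ⊕ Fin M) (Polynomial ℤ))).prod
        ⟨mu, hsub⟩ ⟨lam, le_rfl⟩ := by
  let Pr : (Fin (N + M + 1) → Sub lam) × (Fin (N + M) → Finset (Finset Cell)) → Prop := fun p =>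
    (p.1 0 = ⟨mu, hsub⟩ ∧ p.1 (Fin.last (N + M)) = ⟨lam, le_rfl⟩) ∧
      ∀ t, (p.1 t.castSucc).1 ≤ (p.1 t.succ).1 ∧
        IsST n (e t) ((p.1 t.succ).1.cells \ (p.1 t.castSucc).1.cells) (p.2 t)
  let Wt : (Fin (N + M + 1) → Sub lam) × (Fin (N + M) → Finset (Finset Cell)) →
      MvPolynomial (Fin N ⊕ Fin M) (Polynomial ℤ) := fun p =>
    ∏ t, ∏ R ∈ p.2 t, MvPolynomial.X (e t) * MvPolynomial.C Polynomial.X ^ ribbonSpin R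
  let S := (Finset.univ ×ˢ Fintype.piFinset fun _ => lam.cells.powerset.powerset).filter Pr
  have hle : ∀ (T : SuperRibbonTableau n N M e lam mu) i, T.chain i ≤ lam := fun T i => by
    have := Fin.monotone_iff_le_succ.2 T.chain_mono (Fin.le_last i)
    rwa [T.chain_last] at this
  have h1 : superRibbonFn n N M e lam mu = ∑ p ∈ S, Wt p := by
    rw [superRibbonFn, ← Finset.sum_coe_sort S, ← finsum_eq_sum_of_fintype]
    refine finsum_eq_of_bijective
      (fun T => (⟨(fun i => ⟨T.chain i, hle T i⟩, T.tiling), ?_⟩ : {p // p ∈ S})) ⟨?_, ?_⟩ ?_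
    · refine Finset.mem_filter.2 ⟨Finset.mem_product.2 ⟨Finset.mem_univ _,
        Fintype.mem_piFinset.2 fun t => ?_⟩, ⟨Subtype.ext T.chain_zero, Subtype.ext T.chain_last⟩,
        fun t => ⟨T.chain_mono t, T.tiling_strip t⟩⟩
      rw [Finset.mem_powerset]
      intro R hR
      rw [Finset.mem_powerset]
      exact (IsST.subset (T.tiling_strip t) hR).trans (Finset.sdiff_subset.trans (hle T t.succ))
    · rintro ⟨c, c1, c2, c3, τ, c4⟩ ⟨d, d1, d2, d3, σ, d4⟩ h
      simp only [Subtype.mk.injEq, Prod.mk.injEq] at h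
      obtain ⟨h1, rfl⟩ := h
      obtain rfl : c = d := funext fun i => congrArg Subtype.val (congrFun h1 i)
      rfl
    · rintro ⟨⟨c, τ⟩, hp⟩
      obtain ⟨-, ⟨h1, h2⟩, h3⟩ := Finset.mem_filter.1 hp
      exact ⟨⟨fun i => (c i).1, congrArg Subtype.val h1, congrArg Subtype.val h2,
        fun t => (h3 t).1, τ, fun t => (h3 t).2⟩, rfl⟩
    · intro T
      simp only [Wt, Finset.prod_mul_distrib, Finset.prod_const, Finset.prod_pow_eq_pow_sum,
        SuperRibbonTableau.spin, tilingSpin, map_pow]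
      rw [mul_comm]
  rw [h1, prod_ofFn_apply, Finset.sum_filter, Finset.sum_product]
  refine Finset.sum_congr rfl fun c _ => ?_
  by_cases hc : c 0 = ⟨mu, hsub⟩ ∧ c (Fin.last (N + M)) = ⟨lam, le_rfl⟩
  · rw [if_pos hc]
    simp only [Lm_eq_sum]
    rw [Finset.prod_univ_sum]
    refine Finset.sum_congr rfl fun τ _ => ?_
    by_cases hτ : ∀ t, (c t.castSucc).1 ≤ (c t.succ).1 ∧
        IsST n (e t) ((c t.succ).1.cells \ (c t.castSucc).1.cells) (τ t)
    · rw [if_pos (show Pr (c, τ) from ⟨hc, hτ⟩)]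
      exact Finset.prod_congr rfl fun t _ => (if_pos (hτ t)).symm
    · rw [if_neg (show ¬ Pr (c, τ) from fun h => hτ h.2)]
      push Not at hτ
      obtain ⟨t, ht⟩ := hτ
      exact (Finset.prod_eq_zero (Finset.mem_univ t) (if_neg fun h => ht h.1 h.2)).symm
  · rw [if_neg hc]
    exact Finset.sum_eq_zero fun τ _ => if_neg fun h => hc h.1

/-- Invariance under any permutation of the letters that preserves both alphabets. -/
theorem rename_superRibbonFn {n : ℕ} (hn : 1 ≤ n) {lam mu : YoungDiagram} (hsub : mu ≤ lam)
    {N M : ℕ} (e : Fin (N + M) ≃ (Fin N ⊕ Fin M)) (σ : Equiv.Perm (Fin N))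
    (τ : Equiv.Perm (Fin M)) :
    MvPolynomial.rename (⇑(Equiv.sumCongr σ τ)) (superRibbonFn n N M e lam mu) =
      superRibbonFn n N M e lam mu := by
  let D : Fin N ⊕ Fin M → Matrix (Sub lam) (Sub lam)
      (MvPolynomial (Fin N ⊕ Fin M) (Polynomial ℤ)) := fun s =>
    Lm (MvPolynomial.C Polynomial.X) n lam s (MvPolynomial.X s)
  let f : MvPolynomial (Fin N ⊕ Fin M) (Polynomial ℤ) →+*
      MvPolynomial (Fin N ⊕ Fin M) (Polynomial ℤ) :=
    (MvPolynomial.rename (R := Polynomial ℤ) (⇑(Equiv.sumCongr σ τ))).toRingHom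
  have hf : ∀ s, f.mapMatrix (D s) = D (Equiv.sumCongr σ τ s) := fun s => by
    have h1 : f (MvPolynomial.C Polynomial.X) = MvPolynomial.C Polynomial.X :=
      MvPolynomial.rename_C _ _
    have h2 : f (MvPolynomial.X s) = MvPolynomial.X (Equiv.sumCongr σ τ s) :=
      MvPolynomial.rename_X _ _
    rw [RingHom.mapMatrix_apply, Lm_map, h1, h2]
    rcases s with s | s <;> rfl
  have hcomm : ∀ s t, Commute (D s) (D t) := fun s t =>
    Lm_comm (by simp) (MvPolynomial.X_ne_zero s) (MvPolynomial.X_ne_zero t) hn lam s t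
  have hprod : f.mapMatrix (List.ofFn fun t => D (e t)).prod = (List.ofFn fun t => D (e t)).prod := by
    rw [map_list_prod, List.map_ofFn]
    let π : Equiv.Perm (Fin (N + M)) := (e.trans (Equiv.sumCongr σ τ)).trans e.symm
    have hπ : (⇑f.mapMatrix ∘ fun t => D (e t)) = (fun t => D (e t)) ∘ π := by
      funext t
      simp only [Function.comp_apply, hf, π, Equiv.trans_apply, Equiv.apply_symm_apply]
    rw [hπ]
    refine (Equiv.Perm.ofFn_comp_perm π _).prod_eq' ?_
    refine List.pairwise_of_forall_mem_list fun a ha b hb => ?_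
    simp only [Function.comp_def, List.mem_ofFn] at ha hb
    obtain ⟨i, rfl⟩ := ha
    obtain ⟨j, rfl⟩ := hb
    exact hcomm _ _
  rw [superRibbonFn_eq n N M e lam mu hsub]
  exact congrFun (congrFun hprod ⟨mu, hsub⟩) ⟨lam, le_rfl⟩

end SuperRibbon

/-- the super ribbon function is symmetric separately in the `x` variables
and in the `y` variables, for any total order on `A ∪ A'` extending the natural orders
of the two alphabets. -/
theorem superRibbonFn_symmetric (n : ℕ) (hn : 1 ≤ n) (lam mu : YoungDiagram) (hsub : mu ≤ lam)
    (N M : ℕ) (hN : 1 ≤ N) (hM : 1 ≤ M)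
    (e : Fin (N + M) ≃ (Fin N ⊕ Fin M))
    (heA : ∀ i j : Fin N, e.symm (Sum.inl i) ≤ e.symm (Sum.inl j) ↔ i ≤ j)
    (heA' : ∀ i j : Fin M, e.symm (Sum.inr i) ≤ e.symm (Sum.inr j) ↔ i ≤ j) :
    (∀ σ : Equiv.Perm (Fin N),
      MvPolynomial.rename (⇑(Equiv.sumCongr σ (Equiv.refl (Fin M))))
        (superRibbonFn n N M e lam mu) = superRibbonFn n N M e lam mu) ∧
    (∀ τ : Equiv.Perm (Fin M),
      MvPolynomial.rename (⇑(Equiv.sumCongr (Equiv.refl (Fin N)) τ))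
        (superRibbonFn n N M e lam mu) = superRibbonFn n N M e lam mu) := by
  exact ⟨fun σ => SuperRibbon.rename_superRibbonFn hn hsub e σ (Equiv.refl _),
    fun τ => SuperRibbon.rename_superRibbonFn hn hsub e (Equiv.refl _) τ⟩
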